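/- Let k be a natural number and let s and m be non-negative integers with 2m ≤ k and s ≥ (k−m)² + (k−m). Then for each ε > 0 there exists a constant C = C(s,k,ε) > 0 such that for all real X ≥ 1 one has J_{s,k}(X) ≤ C·X^{2s − k(k+1)/2 + m² + ε}. -/

import Mathlib

/-- Number of integral solutions of the Vinogradov system
of degree k in 2s variables, all lying in [1, X]. -/
noncomputable def Jcount (s k : ℕ) (X : ℝ) : ℕ :=
  Set.ncard {xy : (Fin s → ℤ) × (Fin s → ℤ) |
    (∀ i, 1 ≤ xy.1 i ∧ (xy.1 i : ℝ) ≤ X) ∧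
    (∀ i, 1 ≤ xy.2 i ∧ (xy.2 i : ℝ) ≤ X) ∧
    ∀ j ∈ Finset.Icc 1 k, ∑ i, ((xy.1 i) ^ j - (xy.2 i) ^ j) = 0}

namespace Vinogradov

/-- Hölder's inequality for finite sums, in a form free of fractional exponents. -/
theorem sum_pow_succ_le_of_pow_eq {ι : Type*} (s : Finset ι) (x A B : ι → ℝ) (m : ℕ)
    (hx : ∀ i ∈ s, 0 ≤ x i) (hA : ∀ i ∈ s, 0 ≤ A i) (hB : ∀ i ∈ s, 0 ≤ B i)
    (h : ∀ i ∈ s, x i ^ (m + 1) = A i * B i ^ m) :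
    (∑ i ∈ s, x i) ^ (m + 1) ≤ (∑ i ∈ s, A i) * (∑ i ∈ s, B i) ^ m := by
  rcases Nat.eq_zero_or_pos m with rfl | hm
  · simp only [zero_add, pow_one, pow_zero, mul_one] at h ⊢
    exact (Finset.sum_congr rfl h).le
  have hm' : (0 : ℝ) < m := by exact_mod_cast hm
  have hm1 : (0 : ℝ) < (m : ℝ) + 1 := by positivity
  have hA0 : 0 ≤ ∑ i ∈ s, A i := Finset.sum_nonneg hA
  have hB0 : 0 ≤ ∑ i ∈ s, B i := Finset.sum_nonneg hB
  have hconj : Real.HolderConjugate ((m : ℝ) + 1) (((m : ℝ) + 1) / m) := by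
    rw [Real.holderConjugate_iff]
    refine ⟨by linarith, ?_⟩
    field_simp
    ring
  have key := Real.inner_le_Lp_mul_Lq_of_nonneg s (f := fun i => A i ^ (1 / ((m : ℝ) + 1)))
    (g := fun i => B i ^ ((m : ℝ) / (m + 1))) hconj
    (fun i hi => Real.rpow_nonneg (hA i hi) _) (fun i hi => Real.rpow_nonneg (hB i hi) _)
  have e1 : ∑ i ∈ s, (A i ^ (1 / ((m : ℝ) + 1))) ^ ((m : ℝ) + 1) = ∑ i ∈ s, A i := by
    refine Finset.sum_congr rfl fun i hi => ?_
    rw [← Real.rpow_mul (hA i hi), one_div_mul_cancel hm1.ne', Real.rpow_one]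
  have e2 : ∑ i ∈ s, (B i ^ ((m : ℝ) / (m + 1))) ^ (((m : ℝ) + 1) / m) = ∑ i ∈ s, B i := by
    refine Finset.sum_congr rfl fun i hi => ?_
    rw [← Real.rpow_mul (hB i hi), div_mul_div_cancel₀ hm1.ne', div_self hm'.ne', Real.rpow_one]
  have e3 : ∑ i ∈ s, x i
      = ∑ i ∈ s, A i ^ (1 / ((m : ℝ) + 1)) * B i ^ ((m : ℝ) / (m + 1)) := by
    refine Finset.sum_congr rfl fun i hi => ?_
    refine (pow_left_inj₀ (hx i hi) (mul_nonneg (Real.rpow_nonneg (hA i hi) _)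
      (Real.rpow_nonneg (hB i hi) _)) (Nat.succ_ne_zero m)).1 ?_
    rw [Nat.succ_eq_add_one, h i hi, mul_pow, ← Real.rpow_natCast (A i ^ _),
      ← Real.rpow_natCast (B i ^ _), ← Real.rpow_mul (hA i hi), ← Real.rpow_mul (hB i hi)]
    push_cast
    rw [one_div_mul_cancel hm1.ne', Real.rpow_one, div_mul_cancel₀ _ hm1.ne', Real.rpow_natCast]
  rw [e1, e2, ← e3] at key
  calc (∑ i ∈ s, x i) ^ (m + 1)
      ≤ ((∑ i ∈ s, A i) ^ (1 / ((m : ℝ) + 1))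
          * (∑ i ∈ s, B i) ^ (1 / (((m : ℝ) + 1) / m))) ^ (m + 1) :=
        pow_le_pow_left₀ (Finset.sum_nonneg hx) key _
    _ = _ := by
        rw [mul_pow, ← Real.rpow_natCast (_ ^ _), ← Real.rpow_natCast ((∑ i ∈ s, B i) ^ _),
          ← Real.rpow_mul hA0, ← Real.rpow_mul hB0]
        push_cast
        rw [one_div_mul_cancel hm1.ne', Real.rpow_one, one_div_div, div_mul_cancel₀ _ hm1.ne',
          Real.rpow_natCast]

/-- The power mean inequality for the norm of a finite sum. -/
theorem norm_sum_pow_le {ι : Type*} (s : Finset ι) (f : ι → ℂ) (q : ℕ) :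
    ‖∑ i ∈ s, f i‖ ^ (q + 1) ≤ (s.card : ℝ) ^ q * ∑ i ∈ s, ‖f i‖ ^ (q + 1) := by
  rcases s.eq_empty_or_nonempty with rfl | hs
  · simp
  have hc : (0 : ℝ) < (s.card : ℝ) ^ q := by
    have := hs.card_pos
    positivity
  have h := pow_sum_div_card_le_sum_pow (s := s) (f := fun i => ‖f i‖)
    (fun i _ => norm_nonneg _) q
  rw [div_le_iff₀ hc, mul_comm] at h
  exact (pow_le_pow_left₀ (norm_nonneg _) (norm_sum_le _ _) _).trans h

/-- Summation over a complete residue system modulo `A * B` in two stages. -/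
theorem sum_range_mul_eq (A B : ℕ) (F : ℕ → ℝ) :
    ∑ z ∈ Finset.range (A * B), F z
      = ∑ x ∈ Finset.range A, ∑ y ∈ Finset.range B, F (x + A * y) := by
  rw [Finset.sum_comm]
  induction B with
  | zero => simp
  | succ B ih =>
    rw [Nat.mul_succ, Finset.sum_range_add, ih, Finset.sum_range_succ]
    congr 1
    exact Finset.sum_congr rfl fun x _ => by rw [add_comm]

/-- The additive character `θ ↦ exp(2πiθ)` of `ℝ`. -/
noncomputable def ee (θ : ℝ) : ℂ := Complex.exp (2 * Real.pi * Complex.I * θ)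

theorem ee_add (a b : ℝ) : ee (a + b) = ee a * ee b := by
  rw [ee, ee, ee, ← Complex.exp_add]
  push_cast
  ring_nf

theorem ee_intCast (n : ℤ) : ee n = 1 := by
  rw [ee, Complex.exp_eq_one_iff]
  exact ⟨n, by push_cast; ring⟩

theorem norm_ee (θ : ℝ) : ‖ee θ‖ = 1 := by
  rw [ee, show (2 * Real.pi * Complex.I * θ : ℂ) = ((2 * Real.pi * θ : ℝ) : ℂ) * Complex.I by
    push_cast; ring, Complex.norm_exp_ofReal_mul_I]

theorem ee_nsmul (n : ℕ) (θ : ℝ) : ee (n * θ) = ee θ ^ n := by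
  rw [ee, ee, ← Complex.exp_nat_mul]
  push_cast
  ring_nf

theorem stdAddChar_intCast_eq_ee (M : ℕ) [NeZero M] (j : ℤ) :
    ZMod.stdAddChar ((j : ZMod M)) = ee (j / M) := by
  rw [ZMod.stdAddChar_coe, ee]
  push_cast
  ring_nf

section ExponentialSums

variable {M k : ℕ} [NeZero M]

/-- The character of `(ℤ/M)^k` attached to the point `(x, x², …, x^k)` of the moment curve. -/
noncomputable def phase (g : Fin k → ZMod M) (x : ℤ) : ℂ :=
  ZMod.stdAddChar (∑ j, g j * (x : ZMod M) ^ (j.val + 1))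

/-- The exponential sum with coefficients `c` over the points `X i`, `i ∈ S`. -/
noncomputable def expSum (S : Finset ℤ) (c : ℤ → ℂ) (X : ℤ → ℤ) (g : Fin k → ZMod M) : ℂ :=
  ∑ i ∈ S, c i * phase g (X i)

/-- The indices `i ∈ S` with `X i ≡ r` modulo `N`. -/
def residueClass (X : ℤ → ℤ) (S : Finset ℤ) (N : ℕ) (r : ℤ) : Finset ℤ :=
  S.filter fun i => (N : ℤ) ∣ X i - r

theorem phase_add (g h : Fin k → ZMod M) (x : ℤ) :
    phase (g + h) x = phase g x * phase h x := by
  rw [phase, phase, phase, ← AddChar.map_add_eq_mul, ← Finset.sum_add_distrib]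
  simp only [Pi.add_apply, add_mul]

theorem phase_zero (x : ℤ) : phase (0 : Fin k → ZMod M) x = 1 := by
  simp [phase]

theorem phase_nsmul (n : ℕ) (g : Fin k → ZMod M) (x : ℤ) :
    phase (n • g) x = phase g x ^ n := by
  induction n with
  | zero => simp [phase_zero]
  | succ n ih => rw [succ_nsmul, phase_add, ih, pow_succ]

theorem phase_sum {ι : Type*} (s : Finset ι) (g : ι → Fin k → ZMod M) (x : ℤ) :
    phase (∑ i ∈ s, g i) x = ∏ i ∈ s, phase (g i) x := by
  classical
  induction s using Finset.induction_on with
  | empty => simp [phase_zero]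
  | insert a s ha ih => rw [Finset.sum_insert ha, Finset.prod_insert ha, phase_add, ih]

theorem norm_phase (g : Fin k → ZMod M) (x : ℤ) : ‖phase g x‖ = 1 := by
  rw [phase, ZMod.stdAddChar_apply, Circle.norm_coe]

theorem phase_eq_prod_ee (g : Fin k → ZMod M) (x : ℤ) :
    phase g x = ∏ j, ee ((x : ℝ) ^ (j.val + 1) / M) ^ (g j).val := by
  have : ∑ j, g j * (x : ZMod M) ^ (j.val + 1)
      = ((∑ j, ((g j).val : ℤ) * x ^ (j.val + 1) : ℤ) : ZMod M) := by
    push_cast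
    simp
  rw [phase, this, stdAddChar_intCast_eq_ee]
  push_cast
  rw [Finset.sum_div]
  have hsum : ∀ (s : Finset (Fin k)) (θ : Fin k → ℝ), ee (∑ j ∈ s, θ j) = ∏ j ∈ s, ee (θ j) := by
    classical
    intro s θ
    induction s using Finset.induction_on with
    | empty => simpa using ee_intCast 0
    | insert a s ha ih => rw [Finset.sum_insert ha, Finset.prod_insert ha, ee_add, ih]
  rw [hsum]
  exact Finset.prod_congr rfl fun j _ => by rw [mul_div_assoc, ee_nsmul]

/-- Every integral polynomial `P` of degree at most `k` yields, for any divisor `D` of `M`,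
a group element whose phase at `x` is `P(x)/D` up to an additive constant. -/
theorem exists_phase_eq_ee_eval (P : Polynomial ℤ) (hP : P.natDegree ≤ k) (D : ℕ) (hD : D ∣ M) :
    ∃ v : Fin k → ZMod M, ∀ x : ℤ,
      phase v x = ee (-(P.coeff 0 : ℝ) / D) * ee ((P.eval x : ℤ) / D) := by
  obtain ⟨E, rfl⟩ := hD
  have hDE : (D * E : ℕ) ≠ 0 := NeZero.ne _
  have hD0 : (D : ℝ) ≠ 0 := by
    have := left_ne_zero_of_mul hDE
    exact_mod_cast this
  have hE0 : (E : ℝ) ≠ 0 := by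
    have := right_ne_zero_of_mul hDE
    exact_mod_cast this
  refine ⟨fun j => ((E * P.coeff (j.val + 1) : ℤ) : ZMod (D * E)), fun x => ?_⟩
  have : ∑ j : Fin k,
      ((E * P.coeff (j.val + 1) : ℤ) : ZMod (D * E)) * (x : ZMod (D * E)) ^ (j.val + 1)
      = ((∑ j : Fin k, (E * P.coeff (j.val + 1)) * x ^ (j.val + 1) : ℤ) : ZMod (D * E)) := by
    push_cast
    rfl
  rw [phase, this, stdAddChar_intCast_eq_ee, ← ee_add]
  congr 1
  have hev : P.eval x = P.coeff 0 + ∑ j : Fin k, P.coeff (j.val + 1) * x ^ (j.val + 1) := by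
    rw [Polynomial.eval_eq_sum_range' (Nat.lt_succ_of_le hP), Finset.sum_range_succ',
      Finset.sum_range (fun j => P.coeff (j + 1) * x ^ (j + 1))]
    simp [add_comm]
  rw [hev]
  push_cast
  simp only [mul_assoc]
  rw [← Finset.mul_sum]
  field_simp
  ring

theorem residueClass_subset (X : ℤ → ℤ) (S : Finset ℤ) (N : ℕ) (r : ℤ) :
    residueClass X S N r ⊆ S := Finset.filter_subset _ _

theorem mem_residueClass {X : ℤ → ℤ} {S : Finset ℤ} {N : ℕ} {r i : ℤ} :
    i ∈ residueClass X S N r ↔ i ∈ S ∧ (N : ℤ) ∣ X i - r := Finset.mem_filter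

theorem expSum_empty (c : ℤ → ℂ) (X : ℤ → ℤ) (g : Fin k → ZMod M) : expSum ∅ c X g = 0 :=
  Finset.sum_empty

theorem residueClass_one (X : ℤ → ℤ) (S : Finset ℤ) (r : ℤ) : residueClass X S 1 r = S := by
  simp [residueClass]

/-- Splitting a sum over a residue class modulo `A` into classes modulo `A * B`. -/
theorem sum_residueClass_refine (X : ℤ → ℤ) (S : Finset ℤ) (A B : ℕ) (hA : 0 < A) (hB : 0 < B)
    (r : ℤ) (F : ℤ → ℂ) :
    ∑ i ∈ residueClass X S A r, F i
      = ∑ y ∈ Finset.range B, ∑ i ∈ residueClass X S (A * B) (r + A * y), F i := by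
  have hA' : (A : ℤ) ≠ 0 := by exact_mod_cast hA.ne'
  have hB' : (0 : ℤ) < B := by exact_mod_cast hB
  rw [← Finset.sum_fiberwise_of_maps_to (t := Finset.range B)
    (g := fun i => (((X i - r) / A) % B).toNat)]
  · refine Finset.sum_congr rfl fun y hy => Finset.sum_congr ?_ fun _ _ => rfl
    ext i
    simp only [Finset.mem_filter, mem_residueClass, and_assoc]
    refine and_congr_right fun _ => ?_
    have hyB : (y : ℤ) < B := by exact_mod_cast Finset.mem_range.1 hy
    constructor
    · rintro ⟨⟨u, hu⟩, h⟩
      rw [hu, Int.mul_ediv_cancel_left _ hA'] at h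
      have h0 := Int.emod_nonneg u hB'.ne'
      have h1 : u % B = y := by omega
      have h2 := Int.emod_add_mul_ediv u B
      refine ⟨u / B, ?_⟩
      push_cast
      linear_combination hu - A * h2 + A * h1
    · rintro ⟨u, hu⟩
      push_cast at hu
      have h1 : X i - r = A * (y + B * u) := by linear_combination hu
      refine ⟨⟨_, h1⟩, ?_⟩
      rw [h1, Int.mul_ediv_cancel_left _ hA', Int.add_mul_emod_self_left,
        Int.emod_eq_of_lt (Int.natCast_nonneg y) hyB, Int.toNat_natCast]
  · intro i _
    have h0 := Int.emod_nonneg ((X i - r) / A) hB'.ne'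
    have h1 := Int.emod_lt_of_pos ((X i - r) / A) hB'
    rw [Finset.mem_range]
    omega

theorem expSum_residueClass_refine (X : ℤ → ℤ) (S : Finset ℤ) (c : ℤ → ℂ) (A B : ℕ) (hA : 0 < A)
    (hB : 0 < B) (r : ℤ) (g : Fin k → ZMod M) :
    expSum (residueClass X S A r) c X g
      = ∑ y ∈ Finset.range B, expSum (residueClass X S (A * B) (r + A * y)) c X g :=
  sum_residueClass_refine X S A B hA hB r _

end ExponentialSums

/-- The critical exponent `k(k+1)/2`. -/
noncomputable def crit (k : ℕ) : ℝ := (k : ℝ) * (k + 1) / 2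

/-- The weighted `q`-th moments of the pieces of an exponential sum, over the residue classes
modulo `N`. -/
noncomputable def levelMoment {M k : ℕ} [NeZero M] (w : (Fin k → ZMod M) → ℝ) (S : Finset ℤ)
    (c : ℤ → ℂ) (X : ℤ → ℤ) (q N : ℕ) : ℝ :=
  ∑ r ∈ Finset.range N, ∑ g, w g * ‖expSum (residueClass X S N r) c X g‖ ^ q

/-- Decoupling of the moment curve of degree `k` into residue classes modulo `p ^ n`, with
constant `K`. -/
def Decouples (p k n : ℕ) [NeZero p] (K : ℝ) : Prop :=
  ∀ (S : Finset ℤ) (c : ℤ → ℂ) (X : ℤ → ℤ),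
    ∑ g : Fin k → ZMod (p ^ (k * n)), ‖expSum S c X g‖ ^ (k * (k + 1))
      ≤ K * (p : ℝ) ^ ((n : ℝ) * (crit k - 1))
        * levelMoment (fun _ : Fin k → ZMod (p ^ (k * n)) => 1) S c X (k * (k + 1)) (p ^ n)

section

variable {M k : ℕ} [NeZero M]

theorem levelMoment_nonneg {w : (Fin k → ZMod M) → ℝ} (hw : ∀ g, 0 ≤ w g) (S : Finset ℤ)
    (c : ℤ → ℂ) (X : ℤ → ℤ) (q N : ℕ) : 0 ≤ levelMoment w S c X q N :=
  Finset.sum_nonneg fun _ _ => Finset.sum_nonneg fun g _ =>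
    mul_nonneg (hw g) (pow_nonneg (norm_nonneg _) _)

/-- A decoupling inequality for the moment curve of degree `l` transfers to a residue class on
which suitable translations of the dual group act like the full set of phases of degree `l`;
a weight invariant under these translations may be inserted. -/
theorem Decouples.weighted_class {p l d : ℕ} [NeZero p] {K : ℝ} (hdec : Decouples p l d K)
    {w : (Fin k → ZMod M) → ℝ} (hw : ∀ g, 0 ≤ w g) (S : Finset ℤ) (c : ℤ → ℂ) (X : ℤ → ℤ)
    (A : ℕ) (hA : 0 < A) (ξ : ℤ) (v : Fin l → Fin k → ZMod M) (κ : Fin l → ℂ)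
    (hκ : ∀ j, ‖κ j‖ = 1)
    (hv : ∀ (j : Fin l) (u : ℤ),
      phase (v j) (ξ + A * u) = κ j * ee ((u : ℝ) ^ (j.val + 1) / (p ^ (l * d) : ℕ)))
    (hinv : ∀ j g, w (g + v j) = w g) :
    ∑ g, w g * ‖expSum (residueClass X S A ξ) c X g‖ ^ (l * (l + 1))
      ≤ K * (p : ℝ) ^ ((d : ℝ) * (crit l - 1))
        * ∑ y ∈ Finset.range (p ^ d), ∑ g,
            w g * ‖expSum (residueClass X S (A * p ^ d) (ξ + A * y)) c X g‖ ^ (l * (l + 1)) := by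
  classical
  set σ : (Fin l → ZMod (p ^ (l * d))) → Fin k → ZMod M := fun h => ∑ j, (h j).val • v j with hσ
  have hA' : (A : ℤ) ≠ 0 := by exact_mod_cast hA.ne'
  have hinv_nsmul : ∀ (j : Fin l) (n : ℕ) (g), w (g + n • v j) = w g := by
    intro j n
    induction n with
    | zero => intro g; simp
    | succ n ih => intro g; rw [succ_nsmul, ← add_assoc, hinv, ih]
  have hinv_sum : ∀ (s : Finset (Fin l)) (m : Fin l → ℕ) (g), w (g + ∑ j ∈ s, m j • v j) = w g := by
    intro s m
    induction s using Finset.induction_on with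
    | empty => intro g; simp
    | insert a s ha ih => intro g; rw [Finset.sum_insert ha, ← add_assoc, ih, hinv_nsmul]
  have hwσ : ∀ h g, w (g + σ h) = w g := fun h g => hinv_sum _ _ g
  set S₀ := residueClass X S A ξ with hS₀
  set X' : ℤ → ℤ := fun i => (X i - ξ) / A with hX'
  have hXX' : ∀ i ∈ S₀, X i = ξ + A * X' i := by
    intro i hi
    have := Int.mul_ediv_cancel' (mem_residueClass.1 hi).2
    rw [hX']
    linarith
  have hshift : ∀ (T : Finset ℤ), T ⊆ S₀ → ∀ g h,
      ‖expSum T c X (g + σ h)‖ = ‖expSum T (fun i => c i * phase g (X i)) X' h‖ := by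
    intro T hT g h
    have : expSum T c X (g + σ h)
        = (∏ j, κ j ^ (h j).val) * expSum T (fun i => c i * phase g (X i)) X' h := by
      rw [expSum, expSum, Finset.mul_sum]
      refine Finset.sum_congr rfl fun i hi => ?_
      have hph : phase (σ h) (X i) = (∏ j, κ j ^ (h j).val) * phase h (X' i) := by
        rw [hσ, phase_sum, phase_eq_prod_ee h, ← Finset.prod_mul_distrib]
        refine Finset.prod_congr rfl fun j _ => ?_
        rw [phase_nsmul, hXX' i (hT hi), hv, mul_pow]
      rw [phase_add, hph]
      ring
    rw [this, norm_mul, norm_prod]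
    simp [hκ]
  have hclass : ∀ y : ℤ, residueClass X' S₀ (p ^ d) y
      = residueClass X S (A * p ^ d) (ξ + A * y) := by
    intro y
    ext i
    rw [mem_residueClass (X := X'), mem_residueClass (N := A * p ^ d)]
    constructor
    · rintro ⟨hi, u, hu⟩
      refine ⟨residueClass_subset _ _ _ _ hi, u, ?_⟩
      have := hXX' i hi
      push_cast at hu ⊢
      linear_combination this + A * hu
    · rintro ⟨hi, u, hu⟩
      push_cast at hu
      have hi' : i ∈ S₀ := mem_residueClass.2
        ⟨hi, y + p ^ d * u, by linear_combination hu⟩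
      refine ⟨hi', u, ?_⟩
      have := hXX' i hi'
      push_cast
      refine mul_left_cancel₀ hA' ?_
      linear_combination hu - this
  have havg : ∀ F : (Fin k → ZMod M) → ℝ,
      (Fintype.card (Fin l → ZMod (p ^ (l * d))) : ℝ) * ∑ g, w g * F g
        = ∑ g, w g * ∑ h, F (g + σ h) := by
    intro F
    have : ∀ h, ∑ g, w g * F (g + σ h) = ∑ g, w g * F g := by
      intro h
      rw [← Equiv.sum_comp (Equiv.addRight (σ h)) fun g => w g * F g]
      exact Finset.sum_congr rfl fun g _ => by rw [Equiv.coe_addRight, hwσ]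
    simp_rw [Finset.mul_sum]
    rw [Finset.sum_comm]
    simp_rw [this]
    rw [Finset.sum_const, Finset.card_univ, nsmul_eq_mul, Finset.mul_sum]
  have hpoint : ∀ g, ∑ h, ‖expSum S₀ c X (g + σ h)‖ ^ (l * (l + 1))
      ≤ K * (p : ℝ) ^ ((d : ℝ) * (crit l - 1)) * ∑ y ∈ Finset.range (p ^ d),
        ∑ h, ‖expSum (residueClass X S (A * p ^ d) (ξ + A * y)) c X (g + σ h)‖
          ^ (l * (l + 1)) := by
    intro g
    have h := hdec S₀ (fun i => c i * phase g (X i)) X'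
    simp only [levelMoment, one_mul] at h
    convert h using 2
    · rename_i h _
      rw [hshift S₀ subset_rfl g h]
    · refine Finset.sum_congr rfl fun y _ => Finset.sum_congr rfl fun h _ => ?_
      rw [← hclass y, hshift _ (residueClass_subset _ _ _ _) g h]
  have hcard : (0 : ℝ) < (Fintype.card (Fin l → ZMod (p ^ (l * d))) : ℝ) := by
    exact_mod_cast Fintype.card_pos
  refine le_of_mul_le_mul_left ?_ hcard
  rw [havg, mul_left_comm, Finset.mul_sum (Finset.range _)]
  simp_rw [havg]
  rw [Finset.sum_comm, Finset.mul_sum]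
  refine Finset.sum_le_sum fun g _ => ?_
  rw [← Finset.mul_sum, mul_left_comm]
  exact mul_le_mul_of_nonneg_left (hpoint g) (hw g)

/-- Summing `Decouples.weighted_class` over all residue classes modulo `A`. -/
theorem Decouples.levelMoment_le {p l d : ℕ} [NeZero p] {K : ℝ} (hK : 0 ≤ K) (hl : 0 < l)
    (hdec : Decouples p l d K)
    {w : (Fin k → ZMod M) → ℝ} (hw : ∀ g, 0 ≤ w g) (S : Finset ℤ) (c : ℤ → ℂ) (X : ℤ → ℤ)
    (A : ℕ) (hA : 0 < A)
    (h : ∀ ξ : ℤ, (residueClass X S A ξ).Nonempty → ∃ (v : Fin l → Fin k → ZMod M)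
      (κ : Fin l → ℂ), (∀ j, ‖κ j‖ = 1) ∧ (∀ (j : Fin l) (u : ℤ),
        phase (v j) (ξ + A * u) = κ j * ee ((u : ℝ) ^ (j.val + 1) / (p ^ (l * d) : ℕ))) ∧
      ∀ j g, w (g + v j) = w g) :
    levelMoment w S c X (l * (l + 1)) A
      ≤ K * (p : ℝ) ^ ((d : ℝ) * (crit l - 1))
        * levelMoment w S c X (l * (l + 1)) (A * p ^ d) := by
  rw [levelMoment, levelMoment, sum_range_mul_eq A (p ^ d)
    (fun z => ∑ g, w g * ‖expSum (residueClass X S (A * p ^ d) z) c X g‖ ^ (l * (l + 1))),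
    Finset.mul_sum]
  refine Finset.sum_le_sum fun ξ _ => ?_
  push_cast
  rcases (residueClass X S A ξ).eq_empty_or_nonempty with he | hne
  · rw [he]
    have : ∑ g : Fin k → ZMod M, w g * ‖expSum ∅ c X g‖ ^ (l * (l + 1)) = 0 := by
      refine Finset.sum_eq_zero fun g _ => ?_
      rw [expSum_empty, norm_zero, zero_pow (by positivity), mul_zero]
    rw [this]
    refine mul_nonneg (mul_nonneg hK (by positivity)) (Finset.sum_nonneg fun _ _ =>
      Finset.sum_nonneg fun g _ => mul_nonneg (hw g) (by positivity))
  · obtain ⟨v, κ, hκ, hv, hinv⟩ := h ξ hne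
    exact_mod_cast hdec.weighted_class hw S c X A hA ξ v κ hκ hv hinv

/-- The trivial bound for passing to finer residue classes. -/
theorem levelMoment_le_refine {w : (Fin k → ZMod M) → ℝ} (hw : ∀ g, 0 ≤ w g) (S : Finset ℤ)
    (c : ℤ → ℂ) (X : ℤ → ℤ) (q A B : ℕ) (hA : 0 < A) (hB : 0 < B) :
    levelMoment w S c X (q + 1) A ≤ (B : ℝ) ^ q * levelMoment w S c X (q + 1) (A * B) := by
  rw [levelMoment, levelMoment, sum_range_mul_eq A B
    (fun z => ∑ g, w g * ‖expSum (residueClass X S (A * B) z) c X g‖ ^ (q + 1)), Finset.mul_sum]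
  refine Finset.sum_le_sum fun ξ _ => ?_
  rw [Finset.sum_comm, Finset.mul_sum]
  refine Finset.sum_le_sum fun g _ => ?_
  rw [← Finset.mul_sum, mul_left_comm]
  refine mul_le_mul_of_nonneg_left ?_ (hw g)
  rw [expSum_residueClass_refine X S c A B hA hB]
  have := norm_sum_pow_le (Finset.range B)
    (fun y => expSum (residueClass X S (A * B) ((ξ : ℤ) + A * y)) c X g) q
  rw [Finset.card_range] at this
  exact_mod_cast this

end

open Polynomial in
/-- The Taylor coefficients of orders `1, …, l` at `y` of the monomials of degrees
`m + 1, …, m + l`. -/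
noncomputable def taylorMatrix {R : Type*} [CommRing R] (m l : ℕ) (y : R) :
    Matrix (Fin l) (Fin l) R :=
  fun i j => (taylor y (X ^ (m + 1 + j.val))).coeff (i.val + 1)

open Polynomial in
theorem taylorMatrix_mulVec {R : Type*} [CommRing R] (m l : ℕ) (y : R) (v : Fin l → R)
    (i : Fin l) :
    (taylorMatrix m l y).mulVec v i
      = (taylor y (∑ j : Fin l, C (v j) * X ^ (m + 1 + j.val))).coeff (i.val + 1) := by
  rw [map_sum, finsetSum_coeff, Matrix.mulVec, dotProduct]
  refine Finset.sum_congr rfl fun j _ => ?_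
  rw [taylor_mul, taylor_C, coeff_C_mul, taylorMatrix, mul_comm]

open Polynomial in
theorem det_taylorMatrix_ne_zero {p : ℕ} [Fact p.Prime] (m l : ℕ) (h : m + l < p) {y : ZMod p}
    (hy : y ≠ 0) : (taylorMatrix m l y).det ≠ 0 := by
  intro hdet
  obtain ⟨v, hv, hmul⟩ := Matrix.exists_mulVec_eq_zero_iff.2 hdet
  apply hv
  set f : (ZMod p)[X] := ∑ j : Fin l, C (v j) * X ^ (m + 1 + j.val) with hf
  set r : (ZMod p)[X] := ∑ j : Fin l, C (v j * (m + 1 + j.val : ℕ)) * X ^ j.val with hr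
  have hderiv : derivative f = X ^ m * r := by
    rw [hf, hr, derivative_sum, Finset.mul_sum]
    refine Finset.sum_congr rfl fun j _ => ?_
    rw [derivative_C_mul_X_pow, show m + 1 + j.val - 1 = m + j.val by omega, pow_add]
    ring
  have hdvd : (X : (ZMod p)[X]) ^ l ∣ taylor y (derivative f) := by
    have : taylor y (derivative f) = derivative (taylor y f) := by
      rw [taylor_apply, taylor_apply, derivative_comp]
      simp
    rw [this, X_pow_dvd_iff]
    intro d hd
    have := congrFun hmul ⟨d, hd⟩
    rw [taylorMatrix_mulVec] at this
    rw [coeff_derivative, this, Pi.zero_apply, zero_mul]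
  rw [hderiv, taylor_mul, taylor_X_pow] at hdvd
  have hcop : IsCoprime ((X : (ZMod p)[X]) ^ l) ((X + C y) ^ m) := by
    refine IsCoprime.pow ⟨-C y⁻¹, C y⁻¹, ?_⟩
    rw [mul_add, ← C_mul, inv_mul_cancel₀ hy, C_1]
    ring
  have hr0 : r = 0 := by
    rw [← taylor_eq_zero (r := y)]
    rcases Nat.eq_zero_or_pos l with rfl | hl
    · simp [hr]
    refine eq_zero_of_dvd_of_natDegree_lt (hcop.dvd_of_dvd_mul_left hdvd) ?_
    rw [natDegree_taylor, natDegree_X_pow]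
    refine lt_of_le_of_lt (natDegree_sum_le_of_forall_le (n := l - 1) _ _ fun j _ => ?_) (by omega)
    exact (natDegree_C_mul_X_pow_le _ _).trans (by omega)
  funext j
  have hc := congrArg (fun q : (ZMod p)[X] => q.coeff j.val) hr0
  simp only [hr, finsetSum_coeff, coeff_C_mul_X_pow, coeff_zero] at hc
  rw [Finset.sum_eq_single j (fun b _ hb => if_neg fun h => hb (Fin.ext h.symm)) (by simp),
    if_pos rfl] at hc
  rcases mul_eq_zero.1 hc with h0 | h0
  · exact h0
  · rw [ZMod.natCast_eq_zero_iff] at h0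
    have := Nat.le_of_dvd (by omega) h0
    omega

open Polynomial in
/-- A polynomial of degree at most `m + l` vanishing to order `m + 1` at the origin may be chosen
to behave like `z ^ (i + 1)`, up to a constant, near a point `y` coprime to `p`. -/
theorem exists_poly_eval_add {p : ℕ} [Fact p.Prime] (m l R : ℕ) (h : m + l < p) {y : ℤ}
    (hy : ¬ (p : ℤ) ∣ y) (i : Fin l) :
    ∃ Q : ℤ[X], Q.natDegree ≤ m + l ∧ X ^ (m + 1) ∣ Q ∧ ∃ A : ℤ, ∀ z : ℤ, ∃ s t : ℤ,
      Q.eval (y + z) = A + z ^ (i.val + 1) + p ^ R * s + z ^ (l + 1) * t := by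
  classical
  set N := taylorMatrix m l y with hN
  have hdet : ¬ (p : ℤ) ∣ N.det := by
    rw [← ZMod.intCast_zmod_eq_zero_iff_dvd, ← eq_intCast (Int.castRingHom (ZMod p)),
      RingHom.map_det]
    have : (Int.castRingHom (ZMod p)).mapMatrix N = taylorMatrix m l (y : ZMod p) := by
      ext a b
      have hm := congrArg (fun q : (ZMod p)[X] => q.coeff (a.val + 1))
        (map_taylor (X ^ (m + 1 + b.val) : ℤ[X]) y (Int.castRingHom (ZMod p)))
      simp only [coeff_map, Polynomial.map_pow, map_X] at hm
      simpa [hN, taylorMatrix] using hm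
    rw [this]
    refine det_taylorMatrix_ne_zero m l h ?_
    rwa [Ne, ZMod.intCast_zmod_eq_zero_iff_dvd]
  have hcop : IsCoprime N.det ((p : ℤ) ^ R) := by
    refine IsCoprime.pow_right ?_
    exact ((Nat.prime_iff_prime_int.1 Fact.out).coprime_iff_not_dvd.2 hdet).symm
  obtain ⟨D, E, hDE⟩ := hcop
  set v : Fin l → ℤ := fun j => D * N.adjugate j i with hv
  have hNv : ∀ a, N.mulVec v a = if a = i then D * N.det else 0 := by
    intro a
    have hadj := congrFun (congrFun (Matrix.mul_adjugate N) a) i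
    rw [Matrix.mul_apply, Matrix.smul_apply, Matrix.one_apply, smul_eq_mul] at hadj
    rw [Matrix.mulVec, dotProduct]
    simp only [hv]
    rw [show ∑ x, N a x * (D * N.adjugate x i) = D * ∑ x, N a x * N.adjugate x i by
      rw [Finset.mul_sum]; exact Finset.sum_congr rfl fun x _ => by ring, hadj]
    split_ifs <;> simp
  set Q : ℤ[X] := ∑ j : Fin l, C (v j) * X ^ (m + 1 + j.val) with hQ
  refine ⟨Q, ?_, ?_, (taylor y Q).coeff 0, fun z => ?_⟩
  · refine natDegree_sum_le_of_forall_le _ _ fun j _ => ?_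
    exact (natDegree_C_mul_X_pow_le _ _).trans (by omega)
  · refine Finset.dvd_sum fun j _ => ?_
    exact Dvd.dvd.mul_left (pow_dvd_pow _ (by omega)) _
  · have hexp : ∃ t : ℤ, (taylor y Q).eval z
        = ∑ d ∈ Finset.range (l + 1), (taylor y Q).coeff d * z ^ d + z ^ (l + 1) * t := by
      rw [eval_eq_sum_range' (n := l + 1 + (taylor y Q).natDegree) (by omega),
        Finset.sum_range_add]
      refine ⟨∑ d ∈ Finset.range (taylor y Q).natDegree,
        (taylor y Q).coeff (l + 1 + d) * z ^ d, ?_⟩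
      rw [Finset.mul_sum]
      congr 1
      exact Finset.sum_congr rfl fun d _ => by rw [pow_add]; ring
    obtain ⟨t, ht⟩ := hexp
    refine ⟨-E * z ^ (i.val + 1), t, ?_⟩
    have hsum : ∑ d ∈ Finset.range l, (taylor y Q).coeff (d + 1) * z ^ (d + 1)
        = D * N.det * z ^ (i.val + 1) := by
      rw [Finset.sum_range]
      simp_rw [hQ, ← taylorMatrix_mulVec, ← hN, hNv]
      simp
    rw [add_comm y z, ← taylor_eval, ht, Finset.sum_range_succ', hsum]
    linear_combination (z ^ (i.val + 1)) * hDE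

/-- Two sets of indices lie over distinct residue classes modulo `p`. -/
def Transverse (p : ℕ) (X : ℤ → ℤ) (S T : Finset ℤ) : Prop :=
  ∀ i ∈ S, ∀ j ∈ T, ¬ (p : ℤ) ∣ X i - X j

theorem Transverse.symm {p : ℕ} {X : ℤ → ℤ} {S T : Finset ℤ} (h : Transverse p X S T) :
    Transverse p X T S := by
  intro i hi j hj hd
  refine h j hj i hi ?_
  rw [← neg_sub]
  exact hd.neg_right

theorem expSum_add_of_phase_eq {M k : ℕ} [NeZero M] {S : Finset ℤ} (c : ℤ → ℂ) (X : ℤ → ℤ)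
    {v : Fin k → ZMod M} {κ : ℂ} (hκ : ‖κ‖ = 1) (h : ∀ i ∈ S, phase v (X i) = κ)
    (g : Fin k → ZMod M) : ‖expSum S c X (g + v)‖ = ‖expSum S c X g‖ := by
  have : expSum S c X (g + v) = κ * expSum S c X g := by
    rw [expSum, expSum, Finset.mul_sum]
    refine Finset.sum_congr rfl fun i hi => ?_
    rw [phase_add, h i hi]
    ring
  rw [this, norm_mul, hκ, one_mul]

theorem mul_add_eq_of_le {l i : ℕ} (a d : ℕ) (h : i ≤ l) :
    l * (a + d) = (l - i) * a + a * i + l * d := by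
  obtain ⟨e, rfl⟩ := Nat.exists_eq_add_of_le h
  rw [Nat.add_sub_cancel_left]
  ring

open Polynomial in
/-- Decoupling at a coarser level, by affine rescaling. -/
theorem Decouples.rescale {p k d a n : ℕ} [NeZero p] {K : ℝ} (hK : 0 ≤ K) (hk : 0 < k)
    (hdec : Decouples p k d K) (hn : a + d = n) (S : Finset ℤ) (c : ℤ → ℂ) (X : ℤ → ℤ) :
    levelMoment (fun _ : Fin k → ZMod (p ^ (k * n)) => 1) S c X (k * (k + 1)) (p ^ a)
      ≤ K * (p : ℝ) ^ ((d : ℝ) * (crit k - 1))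
        * levelMoment (fun _ : Fin k → ZMod (p ^ (k * n)) => 1) S c X (k * (k + 1)) (p ^ n) := by
  have hp : (p : ℝ) ≠ 0 := by exact_mod_cast NeZero.ne p
  rw [← hn, pow_add p a d]
  refine hdec.levelMoment_le hK hk (fun _ => zero_le_one) S c X (p ^ a)
    (pow_pos (NeZero.pos p) _) fun ξ _ => ?_
  have hex : ∀ j : Fin k, ∃ (v : Fin k → ZMod (p ^ (k * (a + d)))) (κ : ℂ), ‖κ‖ = 1 ∧
      ∀ u : ℤ, phase v (ξ + (p ^ a : ℕ) * u)
        = κ * ee ((u : ℝ) ^ (j.val + 1) / (p ^ (k * d) : ℕ)) := by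
    intro j
    set P : ℤ[X] := C ((p : ℤ) ^ ((k - (j.val + 1)) * a)) * (Polynomial.X - C ξ) ^ (j.val + 1)
      with hP
    obtain ⟨v, hv⟩ := exists_phase_eq_ee_eval (M := p ^ (k * (a + d))) (k := k) P
      ((natDegree_C_mul_le _ _).trans (natDegree_pow_le.trans
        (by rw [natDegree_X_sub_C]; omega))) (p ^ (k * (a + d))) dvd_rfl
    refine ⟨v, ee (-(P.coeff 0 : ℝ) / (p ^ (k * (a + d)) : ℕ)), norm_ee _, fun u => ?_⟩
    rw [hv]
    congr 2
    have hpow : (p : ℝ) ^ (k * (a + d))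
        = p ^ ((k - (j.val + 1)) * a) * (p ^ a) ^ (j.val + 1) * p ^ (k * d) := by
      rw [mul_add_eq_of_le a d (Nat.succ_le_of_lt j.isLt), pow_add, pow_add, pow_mul (p : ℝ) a]
    simp only [hP, eval_mul, eval_C, eval_pow, eval_sub, eval_X, add_sub_cancel_left]
    push_cast
    rw [hpow, mul_pow]
    field_simp
  choose v κ hκ hv using hex
  exact ⟨v, κ, hκ, hv, fun _ _ => rfl⟩

open Polynomial in
/-- One step of congruencing: in the presence of a weight supported on a transverse residue class
modulo `p ^ b`, the moment curve of degree `k` may be decoupled like one of degree `l`. -/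
theorem Decouples.congruence_step {p k l n a b d : ℕ} [Fact p.Prime] {K : ℝ} (hK : 0 ≤ K)
    (hdec : Decouples p l d K) (hl : 0 < l) (hlk : l ≤ k) (hkp : k < p) (hbn : b ≤ n)
    (ha : 0 < a) (hda : l * d ≤ a) (hab : l * (a + d) ≤ (k - l + 1) * b)
    {S T : Finset ℤ} {X : ℤ → ℤ} (hST : Transverse p X S T) (c : ℤ → ℂ) (η : ℤ) {e : ℕ}
    (he : e ≠ 0) :
    levelMoment (fun g : Fin k → ZMod (p ^ (k * n)) =>
        ‖expSum (residueClass X T (p ^ b) η) c X g‖ ^ e) S c X (l * (l + 1)) (p ^ a)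
      ≤ K * (p : ℝ) ^ ((d : ℝ) * (crit l - 1))
        * levelMoment (fun g : Fin k → ZMod (p ^ (k * n)) =>
          ‖expSum (residueClass X T (p ^ b) η) c X g‖ ^ e) S c X (l * (l + 1)) (p ^ (a + d)) := by
  have hp : (p : ℝ) ≠ 0 := by exact_mod_cast NeZero.ne p
  rcases (residueClass X T (p ^ b) η).eq_empty_or_nonempty with hemp | ⟨j₀, hj₀⟩
  · simp [hemp, expSum_empty, levelMoment, he]
  have hb : 0 < b := by
    rcases Nat.eq_zero_or_pos b with rfl | hb
    · have : 0 < l * (a + d) := by positivity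
      omega
    · exact hb
  rw [pow_add p a d]
  refine hdec.levelMoment_le hK hl (fun _ => by positivity) S c X (p ^ a)
    (pow_pos (NeZero.pos p) _) fun ξ ⟨i₀, hi₀⟩ => ?_
  have hy : ¬ (p : ℤ) ∣ ξ - η := by
    intro hdvd
    obtain ⟨hi, hi'⟩ := mem_residueClass.1 hi₀
    obtain ⟨hj, hj'⟩ := mem_residueClass.1 hj₀
    refine hST i₀ hi j₀ hj ?_
    have h1 : (p : ℤ) ∣ X i₀ - ξ :=
      (Int.natCast_dvd_natCast.2 (dvd_pow_self p ha.ne')).trans hi'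
    have h2 : (p : ℤ) ∣ X j₀ - η :=
      (Int.natCast_dvd_natCast.2 (dvd_pow_self p hb.ne')).trans hj'
    have := (h1.add hdvd).sub h2
    rwa [show X i₀ - ξ + (ξ - η) - (X j₀ - η) = X i₀ - X j₀ by ring] at this
  have hRM : p ^ (l * (a + d)) ∣ p ^ (k * n) := by
    refine pow_dvd_pow p (hab.trans (Nat.mul_le_mul ?_ hbn))
    omega
  have hex : ∀ j : Fin l, ∃ (v : Fin k → ZMod (p ^ (k * n))) (κ : ℂ), ‖κ‖ = 1 ∧
      (∀ u : ℤ, phase v (ξ + (p ^ a : ℕ) * u)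
        = κ * ee ((u : ℝ) ^ (j.val + 1) / (p ^ (l * d) : ℕ))) ∧
      ∀ g, ‖expSum (residueClass X T (p ^ b) η) c X (g + v)‖ ^ e
        = ‖expSum (residueClass X T (p ^ b) η) c X g‖ ^ e := by
    intro j
    obtain ⟨Q, hQdeg, ⟨Q', hQ'⟩, A, hA⟩ := exists_poly_eval_add (p := p) (k - l) l
      (l * (a + d)) (by omega) hy j
    set P : ℤ[X] := C ((p : ℤ) ^ ((l - (j.val + 1)) * a)) * Q.comp (Polynomial.X - C η) with hP
    have hPeval : ∀ x, P.eval x = (p : ℤ) ^ ((l - (j.val + 1)) * a) * Q.eval (x - η) := by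
      intro x
      simp [hP]
    obtain ⟨v, hv⟩ := exists_phase_eq_ee_eval (M := p ^ (k * n)) (k := k) P
      ((natDegree_C_mul_le _ _).trans (by
        rw [natDegree_comp, natDegree_X_sub_C, mul_one]; omega)) (p ^ (l * (a + d))) hRM
    refine ⟨v, ee (-(P.coeff 0 : ℝ) / (p ^ (l * (a + d)) : ℕ))
      * ee (((p : ℝ) ^ ((l - (j.val + 1)) * a) * A) / (p ^ (l * (a + d)) : ℕ)), ?_, fun u => ?_,
      fun g => ?_⟩
    · rw [norm_mul, norm_ee, norm_ee, one_mul]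
    · rw [hv, mul_assoc]
      congr 1
      obtain ⟨s, t, hst⟩ := hA ((p ^ a : ℕ) * u)
      obtain ⟨f, hf⟩ := Nat.exists_eq_add_of_le hda
      have hpow : (p : ℝ) ^ (l * (a + d))
          = p ^ ((l - (j.val + 1)) * a) * (p ^ a) ^ (j.val + 1) * p ^ (l * d) := by
        rw [mul_add_eq_of_le a d (Nat.succ_le_of_lt j.isLt), pow_add, pow_add, pow_mul (p : ℝ) a]
      have hexp' : a * (l + 1) = l * (a + d) + f := by
        rw [mul_add, mul_add, mul_one]
        nth_rw 2 [hf]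
        ring
      have hsplit : ((P.eval (ξ + (p ^ a : ℕ) * u) : ℤ) : ℝ) / (p ^ (l * (a + d)) : ℕ)
          = ((p : ℝ) ^ ((l - (j.val + 1)) * a) * A) / (p ^ (l * (a + d)) : ℕ)
            + (u : ℝ) ^ (j.val + 1) / (p ^ (l * d) : ℕ)
            + ((p ^ ((l - (j.val + 1)) * a) * (s + p ^ f * u ^ (l + 1) * t) : ℤ) : ℝ) := by
        rw [hPeval, show ξ + (p ^ a : ℕ) * u - η = ξ - η + (p ^ a : ℕ) * u by ring, hst]
        have h3 : ((p : ℝ) ^ a) ^ (l + 1) = (p : ℝ) ^ (l * (a + d)) * p ^ f := by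
          rw [← pow_mul, hexp', pow_add]
        push_cast
        rw [mul_pow, mul_pow, h3, hpow]
        field_simp
        ring
      rw [hsplit, ee_add, ee_intCast, mul_one, ee_add]
    · congr 1
      refine expSum_add_of_phase_eq c X (κ := ee (-(P.coeff 0 : ℝ) / (p ^ (l * (a + d)) : ℕ)))
        (norm_ee _) (fun i hi => ?_) g
      rw [hv]
      obtain ⟨z, hz⟩ := (mem_residueClass.1 hi).2
      have hdvd : ((p ^ (l * (a + d)) : ℕ) : ℤ) ∣ P.eval (X i) := by
        rw [hPeval, hQ', eval_mul, eval_pow, eval_X, hz, mul_pow]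
        push_cast
        rw [← pow_mul]
        refine Dvd.dvd.mul_left (Dvd.dvd.mul_right (Dvd.dvd.mul_right (pow_dvd_pow _ ?_) _) _) _
        rw [mul_comm b]
        exact hab
      obtain ⟨q, hq⟩ := hdvd
      have hq' : ((P.eval (X i) : ℤ) : ℝ) / (p ^ (l * (a + d)) : ℕ) = (q : ℤ) := by
        rw [hq]
        push_cast
        field_simp
      rw [hq', ee_intCast, mul_one]
  choose v κ hκ hv hw using hex
  exact ⟨v, κ, hκ, hv, hw⟩

/-- Decoupling of the moment curve of degree `k` up to `ε`-losses. -/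
def DecouplesEps (p k : ℕ) [NeZero p] : Prop :=
  ∀ ε : ℝ, 0 < ε → ∃ C : ℝ, 1 ≤ C ∧ ∀ n, Decouples p k n (C * (p : ℝ) ^ (ε * n))

/-- Iterating an inequality between scales `a` and `a + d` with `l * d ≤ a`, at the cost of
doubling the loss `ε`. -/
theorem exists_forall_le_of_scale_step {P : ℝ} (hP : 1 < P) {l : ℕ} (hl : 0 < l)
    {C₀ ε τ : ℝ} {q : ℕ} (hC₀ : 1 ≤ C₀) (hε : 0 < ε) (hτ : 0 ≤ τ) :
    ∃ C : ℝ, 1 ≤ C ∧ ∀ (F : ℕ → ℝ) (A : ℕ), (∀ a, 0 ≤ F a) →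
      (∀ a d, 0 < a → l * d ≤ a → a + d ≤ A → F a ≤ C₀ * P ^ ((ε + τ) * d) * F (a + d)) →
      (∀ a d, F a ≤ (P ^ d) ^ q * F (a + d)) →
      ∀ a d, a + d ≤ A → F a ≤ C * P ^ ((2 * ε + τ) * d) * F (a + d) := by
  have hP0 : 0 < P := by linarith
  obtain ⟨d₀, hd₀⟩ := pow_unbounded_of_one_lt C₀ (Real.one_lt_rpow hP hε)
  have hd₀pos : 0 < d₀ := by
    rcases Nat.eq_zero_or_pos d₀ with rfl | h
    · simp only [pow_zero] at hd₀
      linarith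
    · exact h
  set c₀ := l * d₀ with hc₀
  have hc₀pos : 0 < c₀ := by positivity
  have hCd : ∀ d : ℕ, d₀ ≤ d → C₀ * P ^ ((ε + τ) * d) ≤ P ^ ((2 * ε + τ) * d) := by
    intro d hd
    have h1 : C₀ ≤ P ^ (ε * d) := by
      refine hd₀.le.trans ?_
      rw [← Real.rpow_natCast, ← Real.rpow_mul hP0.le]
      refine Real.rpow_le_rpow_of_exponent_le hP.le ?_
      gcongr
    calc C₀ * P ^ ((ε + τ) * d) ≤ P ^ (ε * d) * P ^ ((ε + τ) * d) := by gcongr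
      _ = P ^ ((2 * ε + τ) * d) := by
        rw [← Real.rpow_add hP0]
        ring_nf
  refine ⟨(P ^ c₀) ^ q * C₀, ?_, fun F A hF hstep htriv => ?_⟩
  · exact one_le_mul_of_one_le_of_one_le (one_le_pow₀ (one_le_pow₀ hP.le)) hC₀
  have hlarge : ∀ d a, c₀ ≤ a → a + d ≤ A →
      F a ≤ C₀ * P ^ ((2 * ε + τ) * d) * F (a + d) := by
    intro d
    induction d using Nat.strong_induction_on with
    | _ d ih =>
      intro a ha hA
      rcases le_or_gt (l * d) a with h | h
      · refine (hstep a d (by omega) h hA).trans ?_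
        refine mul_le_mul_of_nonneg_right (mul_le_mul_of_nonneg_left
          (Real.rpow_le_rpow_of_exponent_le hP.le ?_) (by linarith)) (hF _)
        gcongr
        linarith
      · have h1 : l * (a / l) ≤ a := Nat.mul_div_le a l
        have h2 : a / l < d := (Nat.div_lt_iff_lt_mul hl).2 (by rwa [mul_comm])
        have h3 : d₀ ≤ a / l := (Nat.le_div_iff_mul_le hl).2 (by rwa [mul_comm])
        obtain ⟨e, rfl⟩ := Nat.exists_eq_add_of_lt h2
        set d₁ := a / l with hd₁
        have hI := ih (e + 1) (by omega) (a + d₁) (by omega) (by omega)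
        calc F a ≤ C₀ * P ^ ((ε + τ) * d₁) * F (a + d₁) := hstep a d₁ (by omega) h1 (by omega)
          _ ≤ P ^ ((2 * ε + τ) * d₁)
              * (C₀ * P ^ ((2 * ε + τ) * (e + 1 : ℕ)) * F (a + d₁ + (e + 1))) :=
            mul_le_mul (hCd d₁ h3) hI (hF _) (by positivity)
          _ = C₀ * P ^ ((2 * ε + τ) * (d₁ + e + 1 : ℕ)) * F (a + (d₁ + e + 1)) := by
            rw [show a + d₁ + (e + 1) = a + (d₁ + e + 1) by ring,
              show (2 * ε + τ) * ((d₁ + e + 1 : ℕ) : ℝ)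
                = (2 * ε + τ) * d₁ + (2 * ε + τ) * (e + 1 : ℕ) by push_cast; ring,
              Real.rpow_add hP0]
            ring
  intro a d hA
  have hpow : ∀ d₁, d₁ ≤ c₀ → (P ^ d₁) ^ q ≤ (P ^ c₀) ^ q := fun d₁ h =>
    pow_le_pow_left₀ (by positivity) (pow_le_pow_right₀ hP.le h) _
  have hone : ∀ d : ℕ, 1 ≤ P ^ ((2 * ε + τ) * d) := fun d =>
    Real.one_le_rpow hP.le (by positivity)
  rcases le_or_gt c₀ a with h | h
  · refine (hlarge d a h hA).trans ?_
    refine mul_le_mul_of_nonneg_right (mul_le_mul_of_nonneg_right ?_ (by positivity)) (hF _)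
    exact le_mul_of_one_le_left (by linarith) (one_le_pow₀ (one_le_pow₀ hP.le))
  rcases le_or_gt d c₀ with h' | h'
  · refine (htriv a d).trans (mul_le_mul_of_nonneg_right ?_ (hF _))
    refine (hpow d h').trans ?_
    rw [mul_assoc]
    exact le_mul_of_one_le_right (by positivity) (one_le_mul_of_one_le_of_one_le hC₀ (hone d))
  · obtain ⟨d₁, rfl⟩ : ∃ d₁, d = c₀ + d₁ := ⟨d - c₀, by omega⟩
    have hI := hlarge d₁ (a + c₀) (by omega) (by omega)
    rw [add_assoc] at hI
    calc F a ≤ (P ^ c₀) ^ q * F (a + c₀) := htriv a c₀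
      _ ≤ (P ^ c₀) ^ q * (C₀ * P ^ ((2 * ε + τ) * d₁) * F (a + (c₀ + d₁))) := by gcongr
      _ ≤ (P ^ c₀) ^ q * C₀ * P ^ ((2 * ε + τ) * (c₀ + d₁ : ℕ)) * F (a + (c₀ + d₁)) := by
        rw [← mul_assoc, ← mul_assoc]
        refine mul_le_mul_of_nonneg_right (mul_le_mul_of_nonneg_left
          (Real.rpow_le_rpow_of_exponent_le hP.le ?_) (by positivity)) (hF _)
        gcongr
        omega

/-- The mixed moments of the pieces of two exponential sums, over residue classes modulo `A` and
`B` respectively. -/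
noncomputable def mixedMoment (M k : ℕ) [NeZero M] (S T : Finset ℤ) (c : ℤ → ℂ) (X : ℤ → ℤ)
    (l A B : ℕ) : ℝ :=
  ∑ η ∈ Finset.range B, levelMoment (fun g : Fin k → ZMod M =>
    ‖expSum (residueClass X T B η) c X g‖ ^ (k * (k + 1) - l * (l + 1))) S c X (l * (l + 1)) A

section

variable {M k : ℕ} [NeZero M]

theorem mixedMoment_nonneg (S T : Finset ℤ) (c : ℤ → ℂ) (X : ℤ → ℤ) (l A B : ℕ) :
    0 ≤ mixedMoment M k S T c X l A B :=
  Finset.sum_nonneg fun _ _ => levelMoment_nonneg (fun _ => by positivity) _ _ _ _ _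

theorem mixedMoment_eq_sum (S T : Finset ℤ) (c : ℤ → ℂ) (X : ℤ → ℤ) (l A B : ℕ) :
    mixedMoment M k S T c X l A B
      = ∑ z ∈ Finset.range B ×ˢ Finset.range A ×ˢ (Finset.univ : Finset (Fin k → ZMod M)),
        ‖expSum (residueClass X T B z.1) c X z.2.2‖ ^ (k * (k + 1) - l * (l + 1))
          * ‖expSum (residueClass X S A z.2.1) c X z.2.2‖ ^ (l * (l + 1)) := by
  simp only [mixedMoment, levelMoment, Finset.sum_product]

/-- The mixed moments as weighted moments of the second exponential sum. -/
theorem mixedMoment_eq_sum_levelMoment (S T : Finset ℤ) (c : ℤ → ℂ) (X : ℤ → ℤ) (l A B : ℕ) :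
    mixedMoment M k S T c X l A B
      = ∑ ξ ∈ Finset.range A, levelMoment (fun g : Fin k → ZMod M =>
        ‖expSum (residueClass X S A ξ) c X g‖ ^ (l * (l + 1))) T c X
          (k * (k + 1) - l * (l + 1)) B := by
  simp only [mixedMoment, levelMoment]
  rw [Finset.sum_comm]
  refine Finset.sum_congr rfl fun _ _ => Finset.sum_congr rfl fun _ _ =>
    Finset.sum_congr rfl fun _ _ => mul_comm _ _

/-- Interpolation between mixed moments. -/
theorem mixedMoment_pow_le (S T : Finset ℤ) (c : ℤ → ℂ) (X : ℤ → ℤ) (l m A B : ℕ)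
    (hk : l + 1 + m = k) :
    mixedMoment M k S T c X (l + 1) A B ^ (m + 1)
      ≤ mixedMoment M k T S c X m B A * mixedMoment M k S T c X l A B ^ m := by
  have hswap : mixedMoment M k T S c X m B A
      = ∑ z ∈ Finset.range B ×ˢ Finset.range A ×ˢ (Finset.univ : Finset (Fin k → ZMod M)),
        ‖expSum (residueClass X T B z.1) c X z.2.2‖ ^ (m * (m + 1))
          * ‖expSum (residueClass X S A z.2.1) c X z.2.2‖ ^ (k * (k + 1) - m * (m + 1)) := by
    rw [mixedMoment_eq_sum_levelMoment]
    simp only [levelMoment, Finset.sum_product]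
  rw [hswap, mixedMoment_eq_sum, mixedMoment_eq_sum]
  refine sum_pow_succ_le_of_pow_eq _ _ _ _ m (fun _ _ => by positivity) (fun _ _ => by positivity)
    (fun _ _ => by positivity) fun z _ => ?_
  have e1 : k * (k + 1) - (l + 1) * (l + 1 + 1) = m * (m + 2 * l + 3) := by
    rw [← hk, Nat.sub_eq_iff_eq_add (by nlinarith)]
    ring
  have e2 : k * (k + 1) - l * (l + 1) = (m + 1) * (m + 2 * l + 2) := by
    rw [← hk, Nat.sub_eq_iff_eq_add (by nlinarith)]
    ring
  have e3 : k * (k + 1) - m * (m + 1) = (l + 1) * (l + 2 + 2 * m) := by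
    rw [← hk, Nat.sub_eq_iff_eq_add (by nlinarith)]
    ring
  rw [e1, e2, e3]
  ring

/-- The trivial bound for passing to finer residue classes in a mixed moment. -/
theorem mixedMoment_le_refine (S T : Finset ℤ) (c : ℤ → ℂ) (X : ℤ → ℤ) {l A B A' B' : ℕ}
    (hl : 0 < l) (hlk : l < k) (hA : 0 < A) (hB : 0 < B) (hA' : 0 < A') (hB' : 0 < B') :
    mixedMoment M k S T c X l A B
      ≤ (A' * B' : ℝ) ^ (k * (k + 1)) * mixedMoment M k S T c X l (A * A') (B * B') := by
  have hlt : l * (l + 1) < k * (k + 1) := by nlinarith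
  have hA1 : (1 : ℝ) ≤ A' := by exact_mod_cast hA'
  have hB1 : (1 : ℝ) ≤ B' := by exact_mod_cast hB'
  have h1 : mixedMoment M k S T c X l A B
      ≤ (A' : ℝ) ^ (k * (k + 1)) * mixedMoment M k S T c X l (A * A') B := by
    rw [mixedMoment, mixedMoment, Finset.mul_sum]
    refine Finset.sum_le_sum fun η _ => ?_
    obtain ⟨q, hq⟩ : ∃ q, l * (l + 1) = q + 1 :=
      Nat.exists_eq_succ_of_ne_zero (Nat.mul_pos hl (Nat.succ_pos _)).ne'
    have hqk : q ≤ k * (k + 1) := by omega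
    rw [hq]
    refine (levelMoment_le_refine (fun _ => by positivity) S c X q A A' hA hA').trans ?_
    exact mul_le_mul_of_nonneg_right (pow_le_pow_right₀ hA1 hqk)
      (levelMoment_nonneg (fun _ => by positivity) _ _ _ _ _)
  have h2 : mixedMoment M k S T c X l (A * A') B
      ≤ (B' : ℝ) ^ (k * (k + 1)) * mixedMoment M k S T c X l (A * A') (B * B') := by
    rw [mixedMoment_eq_sum_levelMoment, mixedMoment_eq_sum_levelMoment, Finset.mul_sum]
    refine Finset.sum_le_sum fun ξ _ => ?_
    obtain ⟨q, hq⟩ : ∃ q, k * (k + 1) - l * (l + 1) = q + 1 :=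
      Nat.exists_eq_succ_of_ne_zero (by omega)
    have hqk : q ≤ k * (k + 1) := by omega
    rw [hq]
    refine (levelMoment_le_refine (fun _ => by positivity) T c X q B B' hB hB').trans ?_
    exact mul_le_mul_of_nonneg_right (pow_le_pow_right₀ hB1 hqk)
      (levelMoment_nonneg (fun _ => by positivity) _ _ _ _ _)
  rw [mul_pow, mul_assoc]
  exact h1.trans (mul_le_mul_of_nonneg_left h2 (by positivity))

theorem mixedMoment_zero (S T : Finset ℤ) (c : ℤ → ℂ) (X : ℤ → ℤ) (A B : ℕ) :
    mixedMoment M k S T c X 0 A B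
      = A * levelMoment (fun _ : Fin k → ZMod M => 1) T c X (k * (k + 1)) B := by
  rw [mixedMoment_eq_sum_levelMoment]
  simp

theorem pow_mul_pow_le_add {x y : ℝ} (hx : 0 ≤ x) (hy : 0 ≤ y) {i q : ℕ} (h : i ≤ q) :
    x ^ (q - i) * y ^ i ≤ x ^ q + y ^ q := by
  rcases le_total x y with hxy | hxy
  · calc x ^ (q - i) * y ^ i ≤ y ^ (q - i) * y ^ i := by gcongr
      _ = y ^ q := by rw [← pow_add, Nat.sub_add_cancel h]
      _ ≤ _ := le_add_of_nonneg_left (by positivity)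
  · calc x ^ (q - i) * y ^ i ≤ x ^ (q - i) * x ^ i := by gcongr
      _ = x ^ q := by rw [← pow_add, Nat.sub_add_cancel h]
      _ ≤ _ := le_add_of_nonneg_right (by positivity)

theorem mixedMoment_le_add (S T : Finset ℤ) (c : ℤ → ℂ) (X : ℤ → ℤ) {l : ℕ} (hl : l ≤ k)
    (A B : ℕ) :
    mixedMoment M k S T c X l A B
      ≤ A * levelMoment (fun _ : Fin k → ZMod M => 1) T c X (k * (k + 1)) B
        + B * levelMoment (fun _ : Fin k → ZMod M => 1) S c X (k * (k + 1)) A := by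
  have hle : l * (l + 1) ≤ k * (k + 1) := by gcongr
  calc mixedMoment M k S T c X l A B
      ≤ ∑ η ∈ Finset.range B, ∑ ξ ∈ Finset.range A, ∑ g : Fin k → ZMod M,
        (‖expSum (residueClass X T B η) c X g‖ ^ (k * (k + 1))
          + ‖expSum (residueClass X S A ξ) c X g‖ ^ (k * (k + 1))) := by
        rw [mixedMoment]
        refine Finset.sum_le_sum fun η _ => ?_
        rw [levelMoment]
        exact Finset.sum_le_sum fun ξ _ => Finset.sum_le_sum fun g _ =>
          pow_mul_pow_le_add (norm_nonneg _) (norm_nonneg _) hle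
    _ = _ := by
        simp only [levelMoment, one_mul, Finset.sum_add_distrib, Finset.sum_const,
          Finset.card_range, nsmul_eq_mul, Finset.mul_sum]

end

theorem one_le_crit {l : ℕ} (hl : 0 < l) : 1 ≤ crit l := by
  have : (1 : ℝ) ≤ l := by exact_mod_cast hl
  rw [crit]
  nlinarith

/-- Congruencing: in a mixed moment, the first sum can be decoupled like one of lower degree. -/
theorem DecouplesEps.mixedMoment_le {p k l : ℕ} [Fact p.Prime] (hdec : DecouplesEps p l)
    (hl : 0 < l) (hlk : l < k) (hkp : k < p) {ε : ℝ} (hε : 0 < ε) :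
    ∃ C : ℝ, 1 ≤ C ∧ ∀ (n a b d : ℕ) (S T : Finset ℤ) (c : ℤ → ℂ) (X : ℤ → ℤ),
      b ≤ n → l * (a + d) ≤ (k - l + 1) * b → Transverse p X S T →
      mixedMoment (p ^ (k * n)) k S T c X l (p ^ a) (p ^ b)
        ≤ C * (p : ℝ) ^ ((ε + (crit l - 1)) * d)
          * mixedMoment (p ^ (k * n)) k S T c X l (p ^ (a + d)) (p ^ b) := by
  have hp1 : (1 : ℝ) < p := by exact_mod_cast (Fact.out : p.Prime).one_lt
  have hp0 : (0 : ℝ) < p := by linarith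
  obtain ⟨C₀, hC₀, hdec₀⟩ := hdec (ε / 2) (by linarith)
  obtain ⟨q, hq⟩ : ∃ q, l * (l + 1) = q + 1 :=
    Nat.exists_eq_succ_of_ne_zero (Nat.mul_pos hl (Nat.succ_pos _)).ne'
  have hlt : l * (l + 1) < k * (k + 1) := by nlinarith
  obtain ⟨C, hC, hmain⟩ := exists_forall_le_of_scale_step hp1 hl (q := q) hC₀ (half_pos hε)
    (sub_nonneg.2 (one_le_crit hl))
  refine ⟨C, hC, fun n a b d S T c X hbn hab hST => ?_⟩
  rw [mixedMoment, mixedMoment, Finset.mul_sum]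
  refine Finset.sum_le_sum fun η _ => ?_
  have h := hmain (fun a => levelMoment (fun g : Fin k → ZMod (p ^ (k * n)) =>
    ‖expSum (residueClass X T (p ^ b) η) c X g‖ ^ (k * (k + 1) - l * (l + 1))) S c X
      (l * (l + 1)) (p ^ a)) (a + d)
    (fun a => levelMoment_nonneg (fun _ => by positivity) _ _ _ _ _)
    (fun a₁ d₁ ha₁ hd₁ hA => ?_) (fun a₁ d₁ => ?_) a d le_rfl
  · rwa [show 2 * (ε / 2) = ε by ring] at h
  · have := (hdec₀ d₁).congruence_step (by positivity) hl hlk.le hkp hbn ha₁ hd₁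
      ((Nat.mul_le_mul_left l hA).trans hab) hST c η
      (e := k * (k + 1) - l * (l + 1)) (by omega)
    rw [add_mul, Real.rpow_add hp0, mul_comm (crit l - 1), ← mul_assoc C₀]
    exact this
  · rw [hq, pow_add p]
    exact_mod_cast levelMoment_le_refine (fun _ => by positivity) S c X q (p ^ a₁) (p ^ d₁)
      (pow_pos (NeZero.pos p) _) (pow_pos (NeZero.pos p) _)

theorem levelMoment_le_of_decouples {p k : ℕ} [NeZero p] (hk : 0 < k) {C η : ℝ} (hC : 0 ≤ C)
    (hdec : ∀ n, Decouples p k n (C * (p : ℝ) ^ (η * n))) {n a : ℕ} (han : a ≤ n)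
    (S : Finset ℤ) (c : ℤ → ℂ) (X : ℤ → ℤ) :
    levelMoment (fun _ : Fin k → ZMod (p ^ (k * n)) => 1) S c X (k * (k + 1)) (p ^ a)
      ≤ C * (p : ℝ) ^ (((n : ℝ) - a) * (crit k - 1 + η))
        * levelMoment (fun _ : Fin k → ZMod (p ^ (k * n)) => 1) S c X (k * (k + 1)) (p ^ n) := by
  have hp0 : (0 : ℝ) < p := by exact_mod_cast NeZero.pos p
  obtain ⟨d, rfl⟩ := Nat.exists_eq_add_of_le han
  have h := (hdec d).rescale (by positivity) hk rfl S c X (a := a)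
  rw [mul_assoc C, ← Real.rpow_add hp0] at h
  convert h using 4
  push_cast
  ring

/-- The exponent governing the size of the mixed moments. -/
noncomputable def mixedExponent (k l a b : ℕ) : ℝ :=
  a * (1 - crit l) + b * (1 - crit k + crit l)

/-- The savings in the bounds for mixed moments after iterating. -/
noncomputable def gain (k : ℕ) (η : ℝ) : ℕ → ℕ → ℝ
  | 0, l => if l = 0 then η else -(k * crit k)
  | N + 1, l => if l = 0 then η else
      gain k η N (k - l) / l + ((k - l : ℕ) : ℝ) / ((k - l : ℕ) + 1) * gain k η N (l - 1)

theorem gain_zero_right (k : ℕ) (η : ℝ) (N : ℕ) : gain k η N 0 = η := by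
  cases N <;> simp [gain]

theorem gain_zero_succ (k : ℕ) (η : ℝ) (l : ℕ) : gain k η 0 (l + 1) = -(k * crit k) := by
  simp [gain]

theorem gain_succ_succ {k l m : ℕ} (η : ℝ) (N : ℕ) (hk : l + 1 + m = k) :
    gain k η (N + 1) (l + 1)
      = gain k η N m / (l + 1) + (m : ℝ) / (m + 1) * gain k η N l := by
  rw [gain, if_neg (Nat.succ_ne_zero l), show k - (l + 1) = m by omega, Nat.add_sub_cancel]
  push_cast
  rfl

theorem le_of_pow_succ_le {Q Q₁ Q₂ C P U e₁ e₂ e : ℝ} {m : ℕ}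
    (hQ₂ : 0 ≤ Q₂) (hC : 0 ≤ C) (hP : 0 < P) (hU : 0 ≤ U) (h : Q ^ (m + 1) ≤ Q₁ * Q₂ ^ m)
    (h₁ : Q₁ ≤ C * P ^ e₁ * U) (h₂ : Q₂ ≤ C * P ^ e₂ * U) (he : e₁ + m * e₂ = (m + 1) * e) :
    Q ≤ C * P ^ e * U := by
  refine le_of_pow_le_pow_left₀ (Nat.succ_ne_zero m) (by positivity) ?_
  calc Q ^ (m + 1) ≤ Q₁ * Q₂ ^ m := h
    _ ≤ (C * P ^ e₁ * U) * (C * P ^ e₂ * U) ^ m := by gcongr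
    _ = C ^ (m + 1) * (P ^ e₁ * (P ^ e₂) ^ m) * U ^ (m + 1) := by ring
    _ = (C * P ^ e * U) ^ (m + 1) := by
      rw [← Real.rpow_natCast (P ^ e₂), ← Real.rpow_mul hP.le, ← Real.rpow_add hP, mul_comm e₂, he,
        mul_pow, mul_pow, ← Real.rpow_natCast (P ^ e), ← Real.rpow_mul hP.le]
      push_cast
      rw [mul_comm e]

/-- The exponents in the interpolation inequality are consistent. -/
theorem mixedExponent_interpolate {k l m : ℕ} (hk : l + 1 + m = k) (a b : ℕ) :
    mixedExponent k m b a + m * mixedExponent k l a b = (m + 1) * mixedExponent k (l + 1) a b := by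
  subst hk
  simp only [mixedExponent, crit]
  push_cast
  ring

section

variable {p k : ℕ} [Fact p.Prime] {C₁ η : ℝ}

theorem mixedMoment_zero_le (hk : 0 < k) (hC₁ : 0 ≤ C₁)
    (hdec : ∀ n, Decouples p k n (C₁ * (p : ℝ) ^ (η * n))) {n b : ℕ} (hbn : b ≤ n) (a : ℕ)
    (S T : Finset ℤ) (c : ℤ → ℂ) (X : ℤ → ℤ) :
    mixedMoment (p ^ (k * n)) k S T c X 0 (p ^ a) (p ^ b)
      ≤ C₁ * (p : ℝ) ^ (n * (crit k - 1) + mixedExponent k 0 a b + η * n - η * b)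
        * levelMoment (fun _ : Fin k → ZMod (p ^ (k * n)) => 1) T c X (k * (k + 1)) (p ^ n) := by
  have hp0 : (0 : ℝ) < p := by exact_mod_cast NeZero.pos p
  rw [mixedMoment_zero]
  refine (mul_le_mul_of_nonneg_left (levelMoment_le_of_decouples hk hC₁ hdec hbn T c X)
    (by positivity)).trans (le_of_eq ?_)
  rw [← mul_assoc, mul_left_comm]
  push_cast
  rw [← Real.rpow_natCast, ← Real.rpow_add hp0]
  congr 3
  simp only [mixedExponent, crit]
  push_cast
  ring

theorem mixedMoment_le_crude (hη : 0 ≤ η) (hC₁ : 0 ≤ C₁)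
    (hdec : ∀ n, Decouples p k n (C₁ * (p : ℝ) ^ (η * n))) {n a b l : ℕ} (hl : 0 < l) (hlk : l ≤ k)
    (hbn : k * b ≤ n) (hab : a ≤ k * b) (S T : Finset ℤ) (c : ℤ → ℂ) (X : ℤ → ℤ) {U : ℝ}
    (hS : levelMoment (fun _ : Fin k → ZMod (p ^ (k * n)) => 1) S c X (k * (k + 1)) (p ^ n) ≤ U)
    (hT : levelMoment (fun _ : Fin k → ZMod (p ^ (k * n)) => 1) T c X (k * (k + 1)) (p ^ n) ≤ U) :
    mixedMoment (p ^ (k * n)) k S T c X l (p ^ a) (p ^ b)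
      ≤ 2 * C₁ * (p : ℝ) ^ (n * (crit k - 1) + mixedExponent k l a b + η * n + k * crit k * b)
        * U := by
  have hp1 : (1 : ℝ) ≤ p := by exact_mod_cast (Fact.out : p.Prime).one_le
  have hp0 : (0 : ℝ) < p := by linarith
  have hk : 0 < k := by omega
  have hbn' : b ≤ n := (Nat.le_mul_of_pos_left b hk).trans hbn
  have hU : 0 ≤ U := (levelMoment_nonneg (fun _ => zero_le_one) _ _ _ _ _).trans hS
  have hcrit : crit l ≤ crit k := by
    have : (l : ℝ) ≤ k := by exact_mod_cast hlk
    simp only [crit]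
    gcongr
  have hk1 : (1 : ℝ) ≤ k := by exact_mod_cast hk
  have hab' : (a : ℝ) ≤ k * b := by exact_mod_cast hab
  have hl1 := one_le_crit hl
  have ha0 : (0 : ℝ) ≤ a := by positivity
  have hb0 : (0 : ℝ) ≤ b := by positivity
  have h1 : (p ^ a : ℕ) * levelMoment (fun _ : Fin k → ZMod (p ^ (k * n)) => 1) T c X
      (k * (k + 1)) (p ^ b)
      ≤ C₁ * (p : ℝ) ^ (n * (crit k - 1) + mixedExponent k l a b + η * n + k * crit k * b) * U := by
    calc _ ≤ (p ^ a : ℕ) * (C₁ * (p : ℝ) ^ (((n : ℝ) - b) * (crit k - 1 + η)) * U) := by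
          refine mul_le_mul_of_nonneg_left ((levelMoment_le_of_decouples hk hC₁ hdec hbn' T c
            X).trans (mul_le_mul_of_nonneg_left hT (by positivity))) (by positivity)
      _ = C₁ * (p : ℝ) ^ (a + ((n : ℝ) - b) * (crit k - 1 + η)) * U := by
          rw [Real.rpow_add hp0, Real.rpow_natCast]
          push_cast
          ring
      _ ≤ _ := by
          refine mul_le_mul_of_nonneg_right (mul_le_mul_of_nonneg_left
            (Real.rpow_le_rpow_of_exponent_le hp1 ?_) hC₁) hU
          rw [mixedExponent]
          have e1 := mul_nonneg hb0 hη
          have e2 := mul_le_mul_of_nonneg_right hab' (by linarith : (0 : ℝ) ≤ crit l)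
          have e3 := mul_le_mul_of_nonneg_left hcrit (by positivity : (0 : ℝ) ≤ k * b)
          have e4 := mul_nonneg hb0 (by linarith : (0 : ℝ) ≤ crit l)
          nlinarith
  have h2 : (p ^ b : ℕ) * levelMoment (fun _ : Fin k → ZMod (p ^ (k * n)) => 1) S c X
      (k * (k + 1)) (p ^ a)
      ≤ C₁ * (p : ℝ) ^ (n * (crit k - 1) + mixedExponent k l a b + η * n + k * crit k * b) * U := by
    calc _ ≤ (p ^ b : ℕ) * (C₁ * (p : ℝ) ^ (((n : ℝ) - a) * (crit k - 1 + η)) * U) := by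
          refine mul_le_mul_of_nonneg_left ((levelMoment_le_of_decouples hk hC₁ hdec
            (hab.trans hbn) S c X).trans (mul_le_mul_of_nonneg_left hS (by positivity)))
            (by positivity)
      _ = C₁ * (p : ℝ) ^ (b + ((n : ℝ) - a) * (crit k - 1 + η)) * U := by
          rw [Real.rpow_add hp0, Real.rpow_natCast]
          push_cast
          ring
      _ ≤ _ := by
          refine mul_le_mul_of_nonneg_right (mul_le_mul_of_nonneg_left
            (Real.rpow_le_rpow_of_exponent_le hp1 ?_) hC₁) hU
          rw [mixedExponent]
          have e1 := mul_nonneg ha0 hη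
          have e2 := mul_nonneg ha0 (sub_nonneg.2 hcrit)
          have e3 := mul_nonneg hb0 (by linarith : (0 : ℝ) ≤ crit l)
          have e4 := mul_nonneg (mul_nonneg hb0 (by linarith : (0 : ℝ) ≤ crit k))
            (sub_nonneg.2 hk1)
          nlinarith
  refine (mixedMoment_le_add S T c X hlk (p ^ a) (p ^ b)).trans ?_
  linarith

open Nat in
/-- The iterated bound for mixed moments. -/
theorem mixedMoment_le_gain (hk : 2 ≤ k) (hkp : k < p)
    (hlow : ∀ l, 0 < l → l < k → DecouplesEps p l)
    (hη : 0 ≤ η) (hC₁ : 1 ≤ C₁) (hdec : ∀ n, Decouples p k n (C₁ * (p : ℝ) ^ (η * n))) (N : ℕ) :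
    ∀ ε : ℝ, 0 < ε → ∃ C : ℝ, 1 ≤ C ∧ ∀ (n l m a b : ℕ) (S T : Finset ℤ) (c : ℤ → ℂ)
      (X : ℤ → ℤ) (U : ℝ), l + 1 + m = k → 0 < m → (l + 1) * a ≤ (m + 1) * b →
      k ! ^ (N + 1) ∣ b → k ! ^ (N + 1) * b ≤ n → Transverse p X S T →
      levelMoment (fun _ : Fin k → ZMod (p ^ (k * n)) => 1) S c X (k * (k + 1)) (p ^ n) ≤ U →
      levelMoment (fun _ : Fin k → ZMod (p ^ (k * n)) => 1) T c X (k * (k + 1)) (p ^ n) ≤ U →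
      mixedMoment (p ^ (k * n)) k S T c X (l + 1) (p ^ a) (p ^ b)
        ≤ C * (p : ℝ) ^ (n * (crit k - 1) + mixedExponent k (l + 1) a b + η * n
          - gain k η N (l + 1) * b + ε * n) * U := by
  have hp1 : (1 : ℝ) ≤ p := by exact_mod_cast (Fact.out : p.Prime).one_le
  have hp0 : (0 : ℝ) < p := by linarith
  have hkfac : k ≤ k ! := Nat.self_le_factorial k
  have hfac : 1 ≤ k ! := Nat.factorial_pos k
  induction N with
  | zero =>
    intro ε hε
    refine ⟨2 * C₁, by linarith, fun n l m a b S T c X U hlm hm hab _ hbn _ hS hT => ?_⟩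
    have hU : 0 ≤ U := (levelMoment_nonneg (fun _ => zero_le_one) _ _ _ _ _).trans hS
    rw [zero_add, pow_one] at hbn
    have hab' : a ≤ k * b := by
      calc a ≤ (l + 1) * a := Nat.le_mul_of_pos_left a (Nat.succ_pos l)
        _ ≤ (m + 1) * b := hab
        _ ≤ k * b := Nat.mul_le_mul_right b (by omega)
    refine (mixedMoment_le_crude hη (by linarith) hdec (Nat.succ_pos l) (by omega)
      ((Nat.mul_le_mul_right b hkfac).trans hbn) hab' S T c X hS hT).trans ?_
    refine mul_le_mul_of_nonneg_right (mul_le_mul_of_nonneg_left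
      (Real.rpow_le_rpow_of_exponent_le hp1 ?_) (by linarith)) hU
    rw [gain_zero_succ]
    have : 0 ≤ ε * n := by positivity
    linarith
  | succ N ih =>
    intro ε hε
    obtain ⟨C₂, hC₂, hIH⟩ := ih (ε / 2) (half_pos hε)
    have hcong : ∀ l, ∃ C : ℝ, 1 ≤ C ∧ (0 < l → l < k →
        ∀ (n a b d : ℕ) (S T : Finset ℤ) (c : ℤ → ℂ) (X : ℤ → ℤ),
        b ≤ n → l * (a + d) ≤ (k - l + 1) * b → Transverse p X S T →
        mixedMoment (p ^ (k * n)) k S T c X l (p ^ a) (p ^ b)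
          ≤ C * (p : ℝ) ^ ((ε / 2 + (crit l - 1)) * d)
            * mixedMoment (p ^ (k * n)) k S T c X l (p ^ (a + d)) (p ^ b)) := by
      intro l
      by_cases h : 0 < l ∧ l < k
      · obtain ⟨C, hC, h'⟩ := (hlow l h.1 h.2).mixedMoment_le h.1 h.2 hkp (half_pos hε)
        exact ⟨C, hC, fun _ _ => h'⟩
      · exact ⟨1, le_rfl, fun h1 h2 => absurd ⟨h1, h2⟩ h⟩
    choose D hD hcong using hcong
    set D₀ := ∑ l ∈ Finset.range k, D l with hD₀
    have hDle : ∀ l, l < k → D l ≤ D₀ := fun l hl =>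
      Finset.single_le_sum (f := D) (fun i _ => by linarith [hD i]) (Finset.mem_range.2 hl)
    have hD₀1 : 1 ≤ D₀ := (hD 0).trans (hDle 0 (by omega))
    refine ⟨D₀ * (C₂ * C₁), one_le_mul_of_one_le_of_one_le hD₀1
      (one_le_mul_of_one_le_of_one_le hC₂ hC₁),
      fun n l m a b S T c X U hlm hm hab hdvd hbn hST hS hT => ?_⟩
    have hU : 0 ≤ U := (levelMoment_nonneg (fun _ => zero_le_one) _ _ _ _ _).trans hS
    obtain ⟨b₁, rfl, hb₁⟩ : ∃ b₁, b = (l + 1) * b₁ ∧ k ! ^ (N + 1) ∣ b₁ := by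
      obtain ⟨f, hf⟩ : l + 1 ∣ k ! := Nat.dvd_factorial (Nat.succ_pos l) (by omega)
      obtain ⟨z, hz⟩ := hdvd
      refine ⟨f * (k ! ^ (N + 1) * z), ?_, f * z, by ring⟩
      rw [hz, pow_succ]
      nth_rw 2 [hf]
      ring
    have hpowpos : 1 ≤ k ! ^ (N + 1) := Nat.one_le_pow _ _ hfac
    have haux : k ! ^ (N + 1) * ((m + 1) * b₁) ≤ n := by
      refine le_trans ?_ hbn
      rw [pow_succ (k !) (N + 1), mul_assoc (k ! ^ (N + 1))]
      refine Nat.mul_le_mul_left _ (Nat.mul_le_mul (by omega) ?_)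
      exact Nat.le_mul_of_pos_left b₁ (Nat.succ_pos l)
    have hbn1 : k ! ^ (N + 1) * ((l + 1) * b₁) ≤ n := by
      refine le_trans (Nat.mul_le_mul_right _ ?_) hbn
      exact Nat.pow_le_pow_right hfac (Nat.le_succ _)
    have hbn0 : (l + 1) * b₁ ≤ n :=
      (Nat.le_mul_of_pos_left _ hpowpos).trans hbn1
    have ha'n : (m + 1) * b₁ ≤ n := (Nat.le_mul_of_pos_left _ hpowpos).trans haux
    have haa' : a ≤ (m + 1) * b₁ := by
      refine le_of_mul_le_mul_left (a := l + 1) ?_ (Nat.succ_pos l)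
      linarith
    obtain ⟨d, hd⟩ := Nat.exists_eq_add_of_le haa'
    set b := (l + 1) * b₁ with hb
    set a' := (m + 1) * b₁ with ha'
    have hstep := hcong (l + 1) (Nat.succ_pos l) (by omega) n a b d S T c X hbn0
      (by rw [← hd, show k - (l + 1) = m by omega, hb, ha']; exact le_of_eq (by ring)) hST
    rw [← hd] at hstep
    have hm' : mixedMoment (p ^ (k * n)) k T S c X m (p ^ b) (p ^ a')
        ≤ C₂ * C₁ * (p : ℝ) ^ (n * (crit k - 1) + mixedExponent k m b a' + η * n
          - gain k η N m * a' + ε / 2 * n) * U := by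
      obtain ⟨m', rfl⟩ : ∃ m', m = m' + 1 := Nat.exists_eq_succ_of_ne_zero hm.ne'
      refine (hIH n m' (l + 1) b a' T S c X U (by omega) (Nat.succ_pos l) ?_
        (hb₁.mul_left _) haux hST.symm hT hS).trans ?_
      · rw [hb, ha']
        nlinarith [Nat.zero_le (m' * b₁), Nat.zero_le b₁, Nat.zero_le (l * b₁)]
      · refine mul_le_mul_of_nonneg_right (mul_le_mul_of_nonneg_right ?_ (by positivity)) hU
        exact le_mul_of_one_le_right (by linarith) hC₁
    have hl' : mixedMoment (p ^ (k * n)) k S T c X l (p ^ a') (p ^ b)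
        ≤ C₂ * C₁ * (p : ℝ) ^ (n * (crit k - 1) + mixedExponent k l a' b + η * n
          - gain k η N l * b + ε / 2 * n) * U := by
      rcases Nat.eq_zero_or_pos l with hl0 | hlpos
      · rw [hl0, gain_zero_right]
        refine (mixedMoment_zero_le (by omega) (by linarith) hdec hbn0 a' S T c X).trans ?_
        refine mul_le_mul (mul_le_mul ?_ (Real.rpow_le_rpow_of_exponent_le hp1 ?_)
          (by positivity) (by positivity)) hT
          (levelMoment_nonneg (fun _ => zero_le_one) _ _ _ _ _) (by positivity)
        · exact le_mul_of_one_le_left (by linarith) hC₂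
        · have : 0 ≤ ε / 2 * n := by positivity
          linarith
      · obtain ⟨l', hl'⟩ : ∃ l', l = l' + 1 := Nat.exists_eq_succ_of_ne_zero hlpos.ne'
        have := hIH n l' (m + 1) a' b S T c X U (by omega) (Nat.succ_pos m) ?_
          (hb₁.mul_left _) hbn1 hST hS hT
        · rw [← hl'] at this
          refine this.trans ?_
          refine mul_le_mul_of_nonneg_right (mul_le_mul_of_nonneg_right ?_ (by positivity)) hU
          exact le_mul_of_one_le_right (by linarith) hC₁
        · rw [← hl', hb, ha']
          nlinarith [Nat.zero_le (m * b₁), Nat.zero_le b₁, Nat.zero_le (l * b₁)]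
    have hholder := le_of_pow_succ_le
      (mixedMoment_nonneg _ _ _ _ _ _ _) (by positivity) hp0 hU
      (mixedMoment_pow_le S T c X l m (p ^ a') (p ^ b) hlm) hm' hl'
      (e := n * (crit k - 1) + mixedExponent k (l + 1) a' b + η * n
          - gain k η (N + 1) (l + 1) * b + ε / 2 * n) (by
        have hb' : (b : ℝ) = (l + 1) * b₁ := by rw [hb]; push_cast; ring
        have ha'' : (a' : ℝ) = (m + 1) * b₁ := by rw [ha']; push_cast; ring
        have hg : (m + 1) * (gain k η (N + 1) (l + 1) * b)
            = gain k η N m * a' + m * (gain k η N l * b) := by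
          rw [gain_succ_succ η N hlm, hb', ha'']
          field_simp
        linear_combination mixedExponent_interpolate hlm a' b + hg)
    calc _ ≤ _ := hstep
      _ ≤ D₀ * (p : ℝ) ^ ((ε / 2 + (crit (l + 1) - 1)) * d)
          * (C₂ * C₁ * (p : ℝ) ^ (n * (crit k - 1) + mixedExponent k (l + 1) a' b + η * n
          - gain k η (N + 1) (l + 1) * b + ε / 2 * n) * U) := by
        refine mul_le_mul ?_ hholder (mixedMoment_nonneg _ _ _ _ _ _ _) (by positivity)
        exact mul_le_mul_of_nonneg_right (hDle _ (by omega)) (by positivity)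
      _ = D₀ * (C₂ * C₁) * (p : ℝ) ^ ((ε / 2 + (crit (l + 1) - 1)) * d + (n * (crit k - 1)
          + mixedExponent k (l + 1) a' b + η * n - gain k η (N + 1) (l + 1) * b
          + ε / 2 * n)) * U := by
        rw [Real.rpow_add hp0 ((ε / 2 + (crit (l + 1) - 1)) * d)]
        ring
      _ ≤ _ := by
        refine mul_le_mul_of_nonneg_right (mul_le_mul_of_nonneg_left
          (Real.rpow_le_rpow_of_exponent_le hp1 ?_) (by positivity)) hU
        have hdn : (d : ℝ) ≤ n := by
          have : d ≤ n := by omega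
          exact_mod_cast this
        have h1 : ε / 2 * d ≤ ε / 2 * n := by gcongr
        rw [mixedExponent, mixedExponent, hd]
        push_cast
        linarith

end

section

variable {M k : ℕ} [NeZero M]

theorem stdAddChar_sum {ι : Type*} (s : Finset ι) (f : ι → ZMod M) :
    (ZMod.stdAddChar (∑ i ∈ s, f i) : ℂ) = ∏ i ∈ s, ZMod.stdAddChar (f i) := by
  classical
  induction s using Finset.induction_on with
  | empty => simp
  | insert a s ha ih => rw [Finset.sum_insert ha, Finset.prod_insert ha, AddChar.map_add_eq_mul, ih]

theorem sum_stdAddChar_eq_ite (v : Fin k → ZMod M) :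
    ∑ g : Fin k → ZMod M, ZMod.stdAddChar (∑ j, g j * v j)
      = if v = 0 then (M : ℂ) ^ k else 0 := by
  have hprod : ∀ g : Fin k → ZMod M, ZMod.stdAddChar (∑ j, g j * v j)
      = ∏ j, (ZMod.stdAddChar (g j * v j) : ℂ) := fun g => stdAddChar_sum _ _
  simp_rw [hprod]
  rw [← Fintype.prod_sum fun (j : Fin k) (x : ZMod M) => (ZMod.stdAddChar (x * v j) : ℂ)]
  simp_rw [AddChar.sum_mulShift _ (ZMod.isPrimitive_stdAddChar M), ZMod.card]
  split_ifs with h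
  · simp [h]
  · obtain ⟨j, hj⟩ := Function.ne_iff.1 h
    exact Finset.prod_eq_zero (Finset.mem_univ j) (by rw [if_neg (by simpa using hj)]; simp)

/-- The large sieve equality for characters of `(ℤ/M)^k`. -/
theorem sum_norm_sq_eq {ι : Type*} (s : Finset ι) (A : ι → ℂ) (v : ι → Fin k → ZMod M) :
    ((∑ g : Fin k → ZMod M,
        ‖∑ i ∈ s, A i * ZMod.stdAddChar (∑ j, g j * v i j)‖ ^ 2 : ℝ) : ℂ)
      = (M : ℂ) ^ k * ∑ i ∈ s, ∑ i' ∈ s,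
        if v i = v i' then A i * (starRingEnd ℂ) (A i') else 0 := by
  have hsq : ∀ g : Fin k → ZMod M,
      ((‖∑ i ∈ s, A i * ZMod.stdAddChar (∑ j, g j * v i j)‖ ^ 2 : ℝ) : ℂ)
        = ∑ i ∈ s, ∑ i' ∈ s, A i * (starRingEnd ℂ) (A i')
          * ZMod.stdAddChar (∑ j, g j * (v i - v i') j) := by
    intro g
    push_cast
    rw [← Complex.mul_conj', map_sum, Finset.sum_mul_sum]
    refine Finset.sum_congr rfl fun i _ => Finset.sum_congr rfl fun i' _ => ?_
    have : ∑ j, g j * (v i - v i') j = ∑ j, g j * v i j + -∑ j, g j * v i' j := by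
      simp only [Pi.sub_apply, mul_sub, Finset.sum_sub_distrib]
      ring
    rw [this, AddChar.map_add_eq_mul, AddChar.map_neg_eq_conj, map_mul]
    ring
  rw [Complex.ofReal_sum, Finset.sum_congr rfl fun g _ => hsq g, Finset.sum_comm, Finset.mul_sum]
  refine Finset.sum_congr rfl fun i _ => ?_
  rw [Finset.sum_comm, Finset.mul_sum]
  refine Finset.sum_congr rfl fun i' _ => ?_
  rw [← Finset.mul_sum, sum_stdAddChar_eq_ite]
  simp only [sub_eq_zero]
  split_ifs
  · ring
  · simp

theorem levelMoment_one_right (w : (Fin k → ZMod M) → ℝ) (S : Finset ℤ) (c : ℤ → ℂ) (X : ℤ → ℤ)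
    (q : ℕ) : levelMoment w S c X q 1 = ∑ g, w g * ‖expSum S c X g‖ ^ q := by
  simp [levelMoment, residueClass_one]

theorem expSum_eq_sum_residueClass (S : Finset ℤ) (c : ℤ → ℂ) (X : ℤ → ℤ) {N : ℕ} (hN : 0 < N)
    (g : Fin k → ZMod M) :
    expSum S c X g = ∑ r ∈ Finset.range N, expSum (residueClass X S N r) c X g := by
  have h := expSum_residueClass_refine X S c 1 N one_pos hN 0 g
  rw [residueClass_one] at h
  simpa using h

end

theorem Decouples.mono {p k n : ℕ} [NeZero p] {K K' : ℝ} (h : Decouples p k n K) (hK : K ≤ K') :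
    Decouples p k n K' := fun S c X =>
  (h S c X).trans (mul_le_mul_of_nonneg_right (mul_le_mul_of_nonneg_right hK (by positivity))
    (levelMoment_nonneg (fun _ => zero_le_one) _ _ _ _ _))

theorem decouples_trivial {p k : ℕ} [NeZero p] (hk : 0 < k) (n : ℕ) :
    Decouples p k n ((p : ℝ) ^ (crit k * n)) := by
  have hp0 : (0 : ℝ) < p := by exact_mod_cast NeZero.pos p
  intro S c X
  obtain ⟨q, hq⟩ : ∃ q, k * (k + 1) = q + 1 :=
    Nat.exists_eq_succ_of_ne_zero (Nat.mul_pos hk (Nat.succ_pos _)).ne'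
  have h := levelMoment_le_refine (fun _ : Fin k → ZMod (p ^ (k * n)) => zero_le_one) S c X q 1
    (p ^ n) one_pos (pow_pos (NeZero.pos p) _)
  rw [levelMoment_one_right, one_mul, ← hq] at h
  simp only [one_mul] at h
  refine h.trans (le_of_eq ?_)
  congr 1
  have hq' : (k : ℝ) * (k + 1) = q + 1 := by exact_mod_cast hq
  push_cast
  rw [← pow_mul, ← Real.rpow_natCast, ← Real.rpow_add hp0]
  congr 1
  push_cast
  rw [crit]
  linear_combination (-(n : ℝ)) * hq'

theorem decouplesEps_one (p : ℕ) [NeZero p] : DecouplesEps p 1 := by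
  have hp1 : (1 : ℝ) ≤ p := by exact_mod_cast NeZero.one_le
  intro ε hε
  refine ⟨1, le_rfl, fun n => ?_⟩
  refine Decouples.mono (K := 1) ?_ (by
    rw [one_mul]
    exact Real.one_le_rpow hp1 (by positivity))
  intro S c X
  have hc1 : (n : ℝ) * (crit 1 - 1) = 0 := by
    rw [crit]
    norm_num
  rw [hc1, Real.rpow_zero, mul_one (1 : ℝ), levelMoment]
  simp only [one_mul]
  have hpos : 0 < p ^ n := pow_pos (NeZero.pos p) _
  set A : ℕ → ℂ := fun r => ∑ i ∈ residueClass X S (p ^ n) r, c i with hA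
  have hclass : ∀ (r : ℕ) (g : Fin 1 → ZMod (p ^ (1 * n))),
      expSum (residueClass X S (p ^ n) r) c X g
        = A r * ZMod.stdAddChar (∑ j, g j * (fun _ => ((r : ℕ) : ZMod (p ^ (1 * n)))) j) := by
    intro r g
    rw [hA, expSum, Finset.sum_mul]
    refine Finset.sum_congr rfl fun i hi => ?_
    have : ((X i : ℤ) : ZMod (p ^ (1 * n))) = (r : ZMod (p ^ (1 * n))) := by
      rw [← Int.cast_natCast r, ← sub_eq_zero, ← Int.cast_sub, ZMod.intCast_zmod_eq_zero_iff_dvd,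
        one_mul]
      exact (mem_residueClass.1 hi).2
    rw [phase]
    simp [this]
  have h1 := sum_norm_sq_eq (k := 1) (M := p ^ (1 * n)) (Finset.range (p ^ n)) A
    (fun r _ => ((r : ℕ) : ZMod (p ^ (1 * n))))
  have h2 : ∑ g : Fin 1 → ZMod (p ^ (1 * n)), ‖expSum S c X g‖ ^ (1 * (1 + 1))
      = (p ^ (1 * n) : ℕ) * ∑ r ∈ Finset.range (p ^ n), ‖A r‖ ^ 2 := by
    have h3 : ∀ r ∈ Finset.range (p ^ n), ∀ r' ∈ Finset.range (p ^ n),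
        ((fun _ : Fin 1 => ((r : ℕ) : ZMod (p ^ (1 * n))))
            = fun _ => ((r' : ℕ) : ZMod (p ^ (1 * n))))
          ↔ r = r' := by
      intro r hr r' hr'
      rw [Finset.mem_range] at hr hr'
      constructor
      · intro h
        have := congrFun h 0
        simp only [ZMod.natCast_eq_natCast_iff] at this
        rw [one_mul] at this
        exact Nat.ModEq.eq_of_lt_of_lt this hr hr'
      · rintro rfl
        rfl
    have h4 : ∑ r ∈ Finset.range (p ^ n), ∑ r' ∈ Finset.range (p ^ n),
        (if (fun _ : Fin 1 => ((r : ℕ) : ZMod (p ^ (1 * n))))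
            = fun _ => ((r' : ℕ) : ZMod (p ^ (1 * n)))
          then A r * (starRingEnd ℂ) (A r') else 0)
        = ∑ r ∈ Finset.range (p ^ n), ((‖A r‖ ^ 2 : ℝ) : ℂ) := by
      refine Finset.sum_congr rfl fun r hr => ?_
      rw [Finset.sum_eq_single_of_mem r hr fun r' hr' hne =>
        if_neg fun h => hne ((h3 r hr r' hr').1 h).symm, if_pos rfl, Complex.mul_conj']
      push_cast
      rfl
    rw [h4, pow_one] at h1
    simp_rw [expSum_eq_sum_residueClass S c X hpos, hclass]
    exact_mod_cast h1
  rw [h2, Finset.mul_sum]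
  refine Finset.sum_le_sum fun r _ => ?_
  simp_rw [hclass, norm_mul, ZMod.stdAddChar_apply, Circle.norm_coe, mul_one]
  rw [Finset.sum_const, nsmul_eq_mul, Finset.card_univ]
  simp

theorem sum_gain (K : ℕ) (η : ℝ) (N : ℕ) :
    ∑ l ∈ Finset.range K, gain (K + 1) η N (l + 1)
      = K * (-((K + 1 : ℕ) * crit (K + 1)) + N * (η / (K + 1))) := by
  induction N with
  | zero =>
    simp only [gain_zero_succ, Finset.sum_const, Finset.card_range, nsmul_eq_mul]
    push_cast
    ring
  | succ N ih =>
    set G := gain (K + 1) η N with hG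
    have h1 : ∀ l ∈ Finset.range K, gain (K + 1) η (N + 1) (l + 1)
        = G (K - 1 - l + 1) / ((l : ℝ) + 1)
          + ((K : ℝ) - l) / ((K : ℝ) - l + 1) * G l := by
      intro l hl
      rw [Finset.mem_range] at hl
      rw [gain_succ_succ (m := K - l) η N (by omega), show K - 1 - l + 1 = K - l by omega,
        Nat.cast_sub hl.le]
    have h2 : ∑ l ∈ Finset.range K, G (K - 1 - l + 1) / ((l : ℝ) + 1)
        = ∑ l ∈ Finset.range K, G (l + 1) / ((K : ℝ) - l) := by
      rw [← Finset.sum_range_reflect]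
      refine Finset.sum_congr rfl fun l hl => ?_
      rw [Finset.mem_range] at hl
      have h : ((K - 1 - l : ℕ) : ℝ) + 1 = K - l := by
        rw [show K - 1 - l = K - (l + 1) by omega, Nat.cast_sub (by omega)]
        push_cast
        ring
      rw [h, show K - 1 - (K - 1 - l) = l by omega]
    have h3 : ∑ l ∈ Finset.range K, ((K : ℝ) - l) / ((K : ℝ) - l + 1) * G l
        = K / (K + 1) * η
          + ∑ l ∈ Finset.range K, ((K : ℝ) - l - 1) / ((K : ℝ) - l) * G (l + 1) := by
      have h4 := Finset.sum_range_succ (fun l => ((K : ℝ) - l) / ((K : ℝ) - l + 1) * G l) K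
      rw [sub_self, zero_div, zero_mul, add_zero] at h4
      rw [← h4, Finset.sum_range_succ', add_comm, hG, gain_zero_right]
      congr 1
      · simp
      · refine Finset.sum_congr rfl fun l _ => ?_
        push_cast
        ring_nf
    rw [Finset.sum_congr rfl h1, Finset.sum_add_distrib, h2, h3]
    have h5 : ∑ l ∈ Finset.range K, G (l + 1) / ((K : ℝ) - l)
        + ∑ l ∈ Finset.range K, ((K : ℝ) - l - 1) / ((K : ℝ) - l) * G (l + 1)
        = ∑ l ∈ Finset.range K, G (l + 1) := by
      rw [← Finset.sum_add_distrib]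
      refine Finset.sum_congr rfl fun l hl => ?_
      rw [Finset.mem_range] at hl
      have : (K : ℝ) - l ≠ 0 := by
        have : (l : ℝ) < K := by exact_mod_cast hl
        linarith
      field_simp
      ring
    have hK : (K : ℝ) + 1 ≠ 0 := by positivity
    rw [add_left_comm, h5, ih]
    push_cast
    field_simp
    ring

/-- The savings become arbitrarily large for at least one index. -/
theorem exists_le_gain {k : ℕ} (hk : 2 ≤ k) (η : ℝ) (N : ℕ) :
    ∃ l m : ℕ, l + 1 + m = k ∧ 0 < m ∧ -(k * crit k) + N * (η / k) ≤ gain k η N (l + 1) := by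
  obtain ⟨K, rfl⟩ : ∃ K, k = K + 1 := ⟨k - 1, by omega⟩
  obtain ⟨l, hl, h⟩ := Finset.exists_le_of_sum_le (s := Finset.range K)
    (f := fun _ => -((K + 1 : ℕ) * crit (K + 1)) + N * (η / (K + 1)))
    (g := fun l => gain (K + 1) η N (l + 1)) ⟨0, Finset.mem_range.2 (by omega)⟩
    (by rw [sum_gain, Finset.sum_const, Finset.card_range, nsmul_eq_mul])
  rw [Finset.mem_range] at hl
  refine ⟨l, K - l, by omega, by omega, ?_⟩
  push_cast at h ⊢
  exact h

/-- Either one summand dominates, or two summands are comparable to the whole sum. -/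
theorem norm_sum_pow_le_broad_narrow (z : ℕ → ℂ) (P : ℕ) {i q : ℕ} (hi : i ≤ q) (hq : q ≠ 0) :
    ‖∑ ξ ∈ Finset.range P, z ξ‖ ^ q
      ≤ 2 ^ q * ∑ ξ ∈ Finset.range P, ‖z ξ‖ ^ q
        + (2 * P) ^ q * ∑ ξ ∈ Finset.range P, ∑ ζ ∈ (Finset.range P).erase ξ,
          ‖z ζ‖ ^ (q - i) * ‖z ξ‖ ^ i := by
  rcases Nat.eq_zero_or_pos P with rfl | hP
  · simp [hq]
  have hP0 : (0 : ℝ) < P := by exact_mod_cast hP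
  have hP1 : (1 : ℝ) ≤ P := by exact_mod_cast hP
  set F := ‖∑ ξ ∈ Finset.range P, z ξ‖ with hF
  have hF0 : 0 ≤ F := norm_nonneg _
  obtain ⟨ξ₀, hξ₀, hmax⟩ := Finset.exists_max_image (Finset.range P) (fun ξ => ‖z ξ‖)
    ⟨0, Finset.mem_range.2 hP⟩
  have hN : 0 ≤ ∑ ξ ∈ Finset.range P, ‖z ξ‖ ^ q := Finset.sum_nonneg fun _ _ => by positivity
  have hB : 0 ≤ ∑ ξ ∈ Finset.range P, ∑ ζ ∈ (Finset.range P).erase ξ,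
      ‖z ζ‖ ^ (q - i) * ‖z ξ‖ ^ i :=
    Finset.sum_nonneg fun _ _ => Finset.sum_nonneg fun _ _ => by positivity
  rcases le_or_gt F (2 * ‖z ξ₀‖) with h | h
  · refine le_add_of_le_of_nonneg ?_ (by positivity)
    calc F ^ q ≤ (2 * ‖z ξ₀‖) ^ q := by gcongr
      _ = 2 ^ q * ‖z ξ₀‖ ^ q := mul_pow _ _ _
      _ ≤ _ := by
        gcongr
        exact Finset.single_le_sum (f := fun ξ => ‖z ξ‖ ^ q) (fun _ _ => by positivity) hξ₀
  · refine le_add_of_nonneg_of_le (by positivity) ?_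
    have h1 : F ≤ ‖z ξ₀‖ + ∑ ζ ∈ (Finset.range P).erase ξ₀, ‖z ζ‖ := by
      rw [Finset.add_sum_erase _ (fun ζ => ‖z ζ‖) hξ₀]
      exact norm_sum_le _ _
    obtain ⟨ζ₀, hζ₀, hlarge⟩ : ∃ ζ ∈ (Finset.range P).erase ξ₀, F / (2 * P) ≤ ‖z ζ‖ := by
      by_contra! hcon
      have h2 : ∑ ζ ∈ (Finset.range P).erase ξ₀, ‖z ζ‖
          ≤ ∑ ζ ∈ (Finset.range P).erase ξ₀, F / (2 * P) :=
        Finset.sum_le_sum fun ζ hζ => (hcon ζ hζ).le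
      rw [Finset.sum_const, nsmul_eq_mul] at h2
      have h3 : (((Finset.range P).erase ξ₀).card : ℝ) ≤ P := by
        have := Finset.card_le_card (Finset.erase_subset ξ₀ (Finset.range P))
        rw [Finset.card_range] at this
        exact_mod_cast this
      have h4 : (((Finset.range P).erase ξ₀).card : ℝ) * (F / (2 * P)) ≤ P * (F / (2 * P)) := by
        gcongr
      have h5 : P * (F / (2 * P)) = F / 2 := by field_simp
      linarith
    have hlarge' : F / (2 * P) ≤ ‖z ξ₀‖ := hlarge.trans (hmax ζ₀ (Finset.mem_of_mem_erase hζ₀))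
    calc F ^ q = (2 * P) ^ q * ((F / (2 * P)) ^ (q - i) * (F / (2 * P)) ^ i) := by
          rw [← pow_add, Nat.sub_add_cancel hi, ← mul_pow]
          congr 1
          field_simp
      _ ≤ (2 * P) ^ q * (‖z ζ₀‖ ^ (q - i) * ‖z ξ₀‖ ^ i) := by gcongr
      _ ≤ _ := by
        gcongr
        refine le_trans ?_ (Finset.single_le_sum (f := fun ξ => ∑ ζ ∈ (Finset.range P).erase ξ,
          ‖z ζ‖ ^ (q - i) * ‖z ξ‖ ^ i)
          (fun _ _ => Finset.sum_nonneg fun _ _ => by positivity) hξ₀)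
        exact Finset.single_le_sum (f := fun ζ => ‖z ζ‖ ^ (q - i) * ‖z ξ₀‖ ^ i)
          (fun _ _ => by positivity) hζ₀

theorem transverse_residueClass {p : ℕ} {X : ℤ → ℤ} (S : Finset ℤ) {ξ ζ : ℕ} (hξ : ξ < p)
    (hζ : ζ < p) (hne : ξ ≠ ζ) :
    Transverse p X (residueClass X S p ξ) (residueClass X S p ζ) := by
  intro i hi j hj hdvd
  apply hne
  have h1 := (mem_residueClass.1 hi).2
  have h2 := (mem_residueClass.1 hj).2
  have h3 := (hdvd.sub h1).add h2
  rw [show X i - X j - (X i - ξ) + (X j - ζ) = (ξ : ℤ) - ζ by ring] at h3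
  have h4 : (ζ : ℕ) ≡ ξ [MOD p] := (Nat.modEq_iff_dvd).2 h3
  exact (Nat.ModEq.eq_of_lt_of_lt h4 hζ hξ).symm

theorem levelMoment_residueClass_le {M k : ℕ} [NeZero M] {w : (Fin k → ZMod M) → ℝ}
    (hw : ∀ g, 0 ≤ w g) (S : Finset ℤ) (c : ℤ → ℂ) (X : ℤ → ℤ) {q A N : ℕ} (hq : q ≠ 0)
    (hA : A ∣ N) (ξ : ℤ) :
    levelMoment w (residueClass X S A ξ) c X q N ≤ levelMoment w S c X q N := by
  refine Finset.sum_le_sum fun r _ => Finset.sum_le_sum fun g _ =>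
    mul_le_mul_of_nonneg_left ?_ (hw g)
  have hAN : (A : ℤ) ∣ N := Int.natCast_dvd_natCast.2 hA
  by_cases h : (A : ℤ) ∣ r - ξ
  · have : residueClass X (residueClass X S A ξ) N r = residueClass X S N r := by
      ext i
      rw [mem_residueClass, mem_residueClass, mem_residueClass, and_assoc]
      refine and_congr_right fun _ => ⟨fun h' => h'.2, fun h' => ⟨?_, h'⟩⟩
      have := (hAN.trans h').add h
      rwa [sub_add_sub_cancel] at this
    rw [this]
  · have : residueClass X (residueClass X S A ξ) N r = ∅ := by
      refine Finset.eq_empty_of_forall_notMem fun i hi => h ?_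
      rw [mem_residueClass, mem_residueClass] at hi
      have := hi.1.2.sub (hAN.trans hi.2)
      rwa [sub_sub_sub_cancel_left] at this
    rw [this, expSum_empty, norm_zero, zero_pow hq]
    positivity

set_option maxHeartbeats 1000000 in
open Nat in
/-- Self-improvement of the decoupling exponent, given decoupling in all lower degrees. -/
theorem exists_decouples_improve {p k : ℕ} [Fact p.Prime] (hk : 2 ≤ k) (hkp : k < p)
    (hp : 16 ≤ p) (hlow : ∀ l, 0 < l → l < k → DecouplesEps p l) {η₀ : ℝ} (hη₀ : 0 < η₀) :
    ∃ θ : ℝ, 0 < θ ∧ ∀ η η' : ℝ, η₀ ≤ η → η - θ ≤ η' → 0 ≤ η' →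
      (∃ C : ℝ, 1 ≤ C ∧ ∀ n, Decouples p k n (C * (p : ℝ) ^ (η * n))) →
      ∃ C : ℝ, 1 ≤ C ∧ ∀ n, Decouples p k n (C * (p : ℝ) ^ (η' * n)) := by
  have hp1 : (1 : ℝ) ≤ p := by exact_mod_cast (Fact.out : p.Prime).one_le
  have hp0 : (0 : ℝ) < p := by linarith
  have hk0 : (0 : ℝ) < k := by
    have : 0 < k := by omega
    exact_mod_cast this
  obtain ⟨N, hN⟩ := exists_nat_ge ((k * crit k + (k * (k + 1) + 2)) / (η₀ / k))
  rw [div_le_iff₀ (by positivity)] at hN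
  set L := k ! ^ (N + 1) with hL
  have hLpos : 0 < L := pow_pos (Nat.factorial_pos k) _
  have hL0 : (0 : ℝ) < L := by exact_mod_cast hLpos
  refine ⟨1 / (2 * L), by positivity, fun η η' hη hη' hη'0 ⟨C₁, hC₁, hdec⟩ => ?_⟩
  set θ : ℝ := 1 / (2 * L) with hθ
  obtain ⟨l, m, hlm, hm, hgain⟩ := exists_le_gain hk η N
  have hgain' : (k : ℝ) * (k + 1) + 2 ≤ gain k η N (l + 1) := by
    have : N * (η₀ / k) ≤ N * (η / k) := by gcongr
    linarith
  obtain ⟨C₂, hC₂, hmixed⟩ := mixedMoment_le_gain hk hkp hlow (hη₀.le.trans hη) hC₁ hdec N θ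
    (by positivity)
  have hlt : (l + 1) * (l + 1 + 1) < k * (k + 1) := by nlinarith
  have hcritle : crit (l + 1) ≤ crit k := by
    have : ((l + 1 : ℕ) : ℝ) ≤ k := by exact_mod_cast (by omega : l + 1 ≤ k)
    simp only [crit]
    gcongr
  have hbroad : ∀ (n : ℕ) (S T : Finset ℤ) (c : ℤ → ℂ) (X : ℤ → ℤ) (U : ℝ), Transverse p X S T →
      levelMoment (fun _ : Fin k → ZMod (p ^ (k * n)) => 1) S c X (k * (k + 1)) (p ^ n) ≤ U →
      levelMoment (fun _ : Fin k → ZMod (p ^ (k * n)) => 1) T c X (k * (k + 1)) (p ^ n) ≤ U →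
      mixedMoment (p ^ (k * n)) k S T c X (l + 1) 1 1
        ≤ C₂ * (p : ℝ) ^ L * (p : ℝ) ^ (n * (crit k - 1) + η' * n) * U := by
    intro n S T c X U hST hS hT
    have hU : 0 ≤ U := (levelMoment_nonneg (fun _ => zero_le_one) _ _ _ _ _).trans hS
    set b := L * (n / (L * L)) with hb
    have hbn : L * b ≤ n := by
      rw [hb, ← mul_assoc]
      exact Nat.mul_div_le n (L * L)
    have hnb : (n : ℝ) / L - L ≤ b := by
      have h1 : n < L * L * (n / (L * L) + 1) := Nat.lt_mul_div_succ n (by positivity)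
      have h2 : (n : ℝ) < L * L * ((n / (L * L) : ℕ) + 1) := by exact_mod_cast h1
      have h3 : (b : ℝ) = L * (n / (L * L) : ℕ) := by rw [hb]; push_cast; rfl
      rw [h3, sub_le_iff_le_add, div_le_iff₀ hL0]
      linarith
    have h := hmixed n l m 0 b S T c X U hlm hm (by simp) ⟨_, hb⟩ hbn hST hS hT
    have href := mixedMoment_le_refine (M := p ^ (k * n)) (k := k) S T c X (l := l + 1) (A := 1)
      (B := 1) (A' := 1) (B' := p ^ b) (Nat.succ_pos l) (by omega) one_pos one_pos one_pos
      (pow_pos (NeZero.pos p) b)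
    rw [one_mul, one_mul] at href
    rw [pow_zero] at h
    refine href.trans ((mul_le_mul_of_nonneg_left h (by positivity)).trans ?_)
    have hpow : (((1 : ℕ) : ℝ) * ((p ^ b : ℕ) : ℝ)) ^ (k * (k + 1))
        = (p : ℝ) ^ ((b : ℝ) * (k * (k + 1))) := by
      push_cast
      rw [one_mul, ← pow_mul, ← Real.rpow_natCast]
      push_cast
      rfl
    rw [hpow]
    calc _ = C₂ * (p : ℝ) ^ ((b : ℝ) * (k * (k + 1)) + (n * (crit k - 1)
          + mixedExponent k (l + 1) 0 b + η * n - gain k η N (l + 1) * b + θ * n)) * U := by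
          rw [Real.rpow_add hp0 ((b : ℝ) * (k * (k + 1)))]
          ring
      _ ≤ C₂ * (p : ℝ) ^ (L + (n * (crit k - 1) + η' * n)) * U := by
          refine mul_le_mul_of_nonneg_right (mul_le_mul_of_nonneg_left
            (Real.rpow_le_rpow_of_exponent_le hp1 ?_) (by linarith)) hU
          have hb0 : (0 : ℝ) ≤ b := by positivity
          have e1 : mixedExponent k (l + 1) 0 b ≤ b := by
            rw [mixedExponent]
            push_cast
            nlinarith
          have e2 := mul_le_mul_of_nonneg_right hgain' hb0
          have e3 := mul_le_mul_of_nonneg_right hη' (by positivity : (0 : ℝ) ≤ n)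
          have e4 : (n : ℝ) / L = 2 * (θ * n) := by
            rw [hθ]
            field_simp
          nlinarith
      _ = _ := by
          rw [Real.rpow_add hp0, Real.rpow_natCast]
          ring
  set B₀ : ℝ := (2 * p) ^ (k * (k + 1)) * (p * (p * (C₂ * (p : ℝ) ^ L))) with hB₀
  have hB₀0 : 0 ≤ B₀ := by positivity
  refine ⟨2 * B₀ + 1, by linarith, fun n => ?_⟩
  induction n with
  | zero =>
    refine (decouples_trivial (by omega) 0).mono ?_
    simp only [Nat.cast_zero, mul_zero, Real.rpow_zero, mul_one]
    linarith
  | succ n ih =>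
    intro S c X
    set U := levelMoment (fun _ : Fin k → ZMod (p ^ (k * (n + 1))) => 1) S c X (k * (k + 1))
      (p ^ (n + 1)) with hU
    have hU0 : 0 ≤ U := levelMoment_nonneg (fun _ => zero_le_one) _ _ _ _ _
    have hpoint : ∀ g : Fin k → ZMod (p ^ (k * (n + 1))), ‖expSum S c X g‖ ^ (k * (k + 1))
        ≤ 2 ^ (k * (k + 1)) * ∑ ξ ∈ Finset.range p,
            ‖expSum (residueClass X S p ξ) c X g‖ ^ (k * (k + 1))
          + (2 * p) ^ (k * (k + 1)) * ∑ ξ ∈ Finset.range p, ∑ ζ ∈ (Finset.range p).erase ξ,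
            ‖expSum (residueClass X S p ζ) c X g‖ ^ (k * (k + 1) - (l + 1) * (l + 1 + 1))
              * ‖expSum (residueClass X S p ξ) c X g‖ ^ ((l + 1) * (l + 1 + 1)) := by
      intro g
      rw [expSum_eq_sum_residueClass S c X (NeZero.pos p)]
      exact norm_sum_pow_le_broad_narrow (fun ξ => expSum (residueClass X S p ξ) c X g) p hlt.le
        (by omega)
    have hnarrow : levelMoment (fun _ : Fin k → ZMod (p ^ (k * (n + 1))) => 1) S c X (k * (k + 1)) p
        ≤ (2 * B₀ + 1) * (p : ℝ) ^ (η' * n) * (p : ℝ) ^ ((n : ℝ) * (crit k - 1)) * U := by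
      have := ih.rescale (by positivity) (by omega) (add_comm 1 n) S c X
      rwa [pow_one] at this
    have hpair : ∀ ξ ∈ Finset.range p, ∀ ζ ∈ (Finset.range p).erase ξ,
        ∑ g : Fin k → ZMod (p ^ (k * (n + 1))),
          ‖expSum (residueClass X S p ζ) c X g‖ ^ (k * (k + 1) - (l + 1) * (l + 1 + 1))
              * ‖expSum (residueClass X S p ξ) c X g‖ ^ ((l + 1) * (l + 1 + 1))
        ≤ C₂ * (p : ℝ) ^ L * (p : ℝ) ^ ((n + 1 : ℕ) * (crit k - 1) + η' * (n + 1 : ℕ)) * U := by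
      intro ξ hξ ζ hζ
      rw [Finset.mem_erase, Finset.mem_range] at hζ
      have hdvd : p ∣ p ^ (n + 1) := dvd_pow_self p (Nat.succ_ne_zero n)
      have := hbroad (n + 1) (residueClass X S p ξ) (residueClass X S p ζ) c X U
        (transverse_residueClass S (Finset.mem_range.1 hξ) hζ.2 hζ.1.symm)
        (levelMoment_residueClass_le (fun _ => zero_le_one) S c X (by omega) hdvd ξ)
        (levelMoment_residueClass_le (fun _ => zero_le_one) S c X (by omega) hdvd ζ)
      rw [mixedMoment, Finset.sum_range_one, levelMoment_one_right, residueClass_one] at this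
      exact this
    have hsplit : (p : ℝ) ^ ((n + 1 : ℕ) * (crit k - 1) + η' * (n + 1 : ℕ))
        = (p : ℝ) ^ (η' * (n + 1 : ℕ)) * (p : ℝ) ^ (((n + 1 : ℕ) : ℝ) * (crit k - 1)) := by
      rw [add_comm, Real.rpow_add hp0]
    have hgap : 2 ^ (k * (k + 1)) * (p : ℝ) ^ ((n : ℝ) * (crit k - 1))
        ≤ 1 / 2 * (p : ℝ) ^ (((n + 1 : ℕ) : ℝ) * (crit k - 1)) := by
      have h1 : (2 : ℝ) * 2 ^ (k * (k + 1)) ≤ (p : ℝ) ^ (crit k - 1) := by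
        have hq : (6 : ℝ) ≤ k * (k + 1) := by
          have : (2 : ℝ) ≤ k := by exact_mod_cast hk
          nlinarith
        calc (2 : ℝ) * 2 ^ (k * (k + 1)) = 2 ^ ((1 : ℝ) + k * (k + 1)) := by
              rw [Real.rpow_add two_pos, Real.rpow_one, ← Real.rpow_natCast]
              push_cast
              rfl
          _ ≤ 2 ^ (4 * (crit k - 1)) := by
              refine Real.rpow_le_rpow_of_exponent_le one_le_two ?_
              rw [crit]
              linarith
          _ = (16 : ℝ) ^ (crit k - 1) := by
              rw [Real.rpow_mul two_pos.le]
              norm_num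
          _ ≤ _ := by
              refine Real.rpow_le_rpow (by norm_num) (by exact_mod_cast hp) ?_
              rw [crit]
              linarith
      have h2 : (p : ℝ) ^ (((n + 1 : ℕ) : ℝ) * (crit k - 1))
          = (p : ℝ) ^ ((n : ℝ) * (crit k - 1)) * (p : ℝ) ^ (crit k - 1) := by
        rw [← Real.rpow_add hp0]
        push_cast
        ring_nf
      rw [h2]
      have h3 : 0 ≤ (p : ℝ) ^ ((n : ℝ) * (crit k - 1)) := by positivity
      nlinarith
    have hmono : (p : ℝ) ^ (η' * n) ≤ (p : ℝ) ^ (η' * (n + 1 : ℕ)) := by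
      refine Real.rpow_le_rpow_of_exponent_le hp1 ?_
      gcongr
      omega
    calc ∑ g : Fin k → ZMod (p ^ (k * (n + 1))), ‖expSum S c X g‖ ^ (k * (k + 1))
        ≤ 2 ^ (k * (k + 1)) * levelMoment (fun _ : Fin k → ZMod (p ^ (k * (n + 1))) => 1) S c X
            (k * (k + 1)) p
          + (2 * p) ^ (k * (k + 1)) * ∑ ξ ∈ Finset.range p, ∑ ζ ∈ (Finset.range p).erase ξ,
            ∑ g : Fin k → ZMod (p ^ (k * (n + 1))),
            ‖expSum (residueClass X S p ζ) c X g‖ ^ (k * (k + 1) - (l + 1) * (l + 1 + 1))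
              * ‖expSum (residueClass X S p ξ) c X g‖ ^ ((l + 1) * (l + 1 + 1)) := by
          refine (Finset.sum_le_sum fun g _ => hpoint g).trans (le_of_eq ?_)
          rw [Finset.sum_add_distrib, ← Finset.mul_sum, ← Finset.mul_sum, levelMoment]
          simp only [one_mul]
          congr 2
          · exact Finset.sum_comm
          · rw [Finset.sum_comm]
            exact Finset.sum_congr rfl fun _ _ => Finset.sum_comm
      _ ≤ 2 ^ (k * (k + 1)) * ((2 * B₀ + 1) * (p : ℝ) ^ (η' * n)
            * (p : ℝ) ^ ((n : ℝ) * (crit k - 1)) * U)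
          + (2 * p) ^ (k * (k + 1)) * (p * (p * (C₂ * (p : ℝ) ^ L
            * ((p : ℝ) ^ (η' * (n + 1 : ℕ)) * (p : ℝ) ^ (((n + 1 : ℕ) : ℝ) * (crit k - 1)))
              * U))) := by
          have hV : 0 ≤ C₂ * (p : ℝ) ^ L
            * ((p : ℝ) ^ (η' * (n + 1 : ℕ)) * (p : ℝ) ^ (((n + 1 : ℕ) : ℝ) * (crit k - 1)))
              * U := by positivity
          refine add_le_add (mul_le_mul_of_nonneg_left hnarrow (by positivity))
            (mul_le_mul_of_nonneg_left ?_ (by positivity))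
          rw [hsplit] at hpair
          refine (Finset.sum_le_card_nsmul _ _ _ fun ξ hξ =>
            (Finset.sum_le_card_nsmul _ _ _ fun ζ hζ => hpair ξ hξ ζ hζ).trans ?_).trans (le_of_eq
              (by rw [Finset.card_range, nsmul_eq_mul]))
          rw [nsmul_eq_mul]
          refine mul_le_mul_of_nonneg_right ?_ hV
          have := Finset.card_le_card (Finset.erase_subset ξ (Finset.range p))
          rw [Finset.card_range] at this
          exact_mod_cast this
      _ ≤ (2 * B₀ + 1) * (p : ℝ) ^ (η' * (n + 1 : ℕ))
            * (p : ℝ) ^ (((n + 1 : ℕ) : ℝ) * (crit k - 1)) * U := by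
          set E₁ := (p : ℝ) ^ (η' * (n + 1 : ℕ)) with hE₁
          set E₂ := (p : ℝ) ^ (((n + 1 : ℕ) : ℝ) * (crit k - 1)) with hE₂
          have hE₁0 : 0 ≤ E₁ := by positivity
          have hE₂0 : 0 ≤ E₂ := by positivity
          have h1 : 2 ^ (k * (k + 1)) * ((2 * B₀ + 1) * (p : ℝ) ^ (η' * n)
              * (p : ℝ) ^ ((n : ℝ) * (crit k - 1)) * U) ≤ (2 * B₀ + 1) * E₁ * (1 / 2 * E₂) * U := by
            calc _ = (2 * B₀ + 1) * (p : ℝ) ^ (η' * n)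
                * (2 ^ (k * (k + 1)) * (p : ℝ) ^ ((n : ℝ) * (crit k - 1))) * U := by ring
              _ ≤ _ := by gcongr
          have h2 : (2 * p) ^ (k * (k + 1)) * (p * (p * (C₂ * (p : ℝ) ^ L * (E₁ * E₂) * U)))
              = B₀ * (E₁ * E₂ * U) := by
            rw [hB₀]
            ring
          rw [h2]
          have h3 : 0 ≤ E₁ * E₂ * U := by positivity
          nlinarith

/-- Decoupling for the moment curve at the critical exponent. -/
theorem decouplesEps {p : ℕ} [Fact p.Prime] (hp : 16 ≤ p) :
    ∀ k, 0 < k → k < p → DecouplesEps p k := by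
  intro k
  induction k using Nat.strong_induction_on with
  | _ k ih =>
    intro hk hkp
    rcases Nat.lt_or_ge k 2 with h1 | h2
    · obtain rfl : k = 1 := by omega
      exact decouplesEps_one p
    intro ε hε
    obtain ⟨θ, hθ, himp⟩ := exists_decouples_improve h2 hkp hp
      (fun l hl hlk => ih l hlk hl (hlk.trans hkp)) hε
    have hdesc : ∀ j : ℕ, ∃ C : ℝ, 1 ≤ C ∧
        ∀ n, Decouples p k n (C * (p : ℝ) ^ (max ε (crit k - j * θ) * n)) := by
      intro j
      induction j with
      | zero =>
        refine ⟨1, le_rfl, fun n => (decouples_trivial hk n).mono ?_⟩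
        have hp1 : (1 : ℝ) ≤ p := by exact_mod_cast (Fact.out : p.Prime).one_le
        rw [one_mul]
        refine Real.rpow_le_rpow_of_exponent_le hp1 ?_
        gcongr
        simp
      | succ j ihj =>
        refine himp _ _ (le_max_left _ _) ?_ (hε.le.trans (le_max_left _ _)) ihj
        rw [sub_le_iff_le_add, max_le_iff]
        constructor
        · linarith [le_max_left ε (crit k - (j + 1 : ℕ) * θ)]
        · have := le_max_right ε (crit k - (j + 1 : ℕ) * θ)
          push_cast at this ⊢
          linarith
    obtain ⟨j, hj⟩ := exists_nat_ge (crit k / θ)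
    rw [div_le_iff₀ hθ] at hj
    have := hdesc j
    rwa [max_eq_left (by linarith)] at this

section

variable {M k : ℕ} [NeZero M]

theorem norm_expSum_le_card (S : Finset ℤ) (g : Fin k → ZMod M) :
    ‖expSum S (fun _ => 1) id g‖ ≤ S.card := by
  refine (norm_sum_le _ _).trans (le_of_eq ?_)
  simp [norm_phase]

theorem levelMoment_le_card {S : Finset ℤ} {N q : ℕ} (hN : 0 < N) (hq : q ≠ 0)
    (hS : ∀ i ∈ S, ∀ j ∈ S, (N : ℤ) ∣ i - j → i = j) :
    levelMoment (fun _ : Fin k → ZMod M => 1) S (fun _ => 1) id q N ≤ S.card * (M : ℝ) ^ k := by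
  have hclass : ∀ r : ℤ, (residueClass id S N r).card ≤ 1 := by
    refine fun r => Finset.card_le_one.2 fun i hi j hj => ?_
    rw [mem_residueClass] at hi hj
    refine hS i hi.1 j hj.1 ?_
    have := hi.2.sub hj.2
    rwa [sub_sub_sub_cancel_right] at this
  have hpow : ∀ (r : ℤ) (g : Fin k → ZMod M),
      ‖expSum (residueClass id S N r) (fun _ => 1) id g‖ ^ q ≤ (residueClass id S N r).card := by
    intro r g
    have h1 := norm_expSum_le_card (residueClass id S N r) g
    have h2 : ((residueClass id S N r).card : ℝ) ≤ 1 := by exact_mod_cast hclass r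
    exact (pow_le_of_le_one (norm_nonneg _) (h1.trans h2) hq).trans h1
  have hcard : ∑ r ∈ Finset.range N, ((residueClass id S N r).card : ℝ) = S.card := by
    have := sum_residueClass_refine id S 1 N one_pos hN 0 (fun _ => (1 : ℂ))
    rw [residueClass_one] at this
    simp only [Finset.sum_const, nsmul_eq_mul, mul_one, one_mul, Nat.cast_one, zero_add] at this
    exact_mod_cast this.symm
  calc _ ≤ ∑ r ∈ Finset.range N, ∑ _g : Fin k → ZMod M, ((residueClass id S N r).card : ℝ) := by
        refine Finset.sum_le_sum fun r _ => Finset.sum_le_sum fun g _ => ?_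
        rw [one_mul]
        exact hpow r g
    _ = _ := by
        rw [Finset.sum_comm, hcard]
        simp [ZMod.card, mul_comm]

/-- Solutions of the Vinogradov system are counted, up to congruence, by moments of exponential
sums. -/
theorem Jcount_mul_le (s : ℕ) (X : ℝ) :
    (Jcount s k X : ℝ) * (M : ℝ) ^ k
      ≤ ∑ g : Fin k → ZMod M, ‖expSum (Finset.Icc 1 ⌊X⌋) (fun _ => 1) id g‖ ^ (2 * s) := by
  classical
  set B := Fintype.piFinset fun _ : Fin s => Finset.Icc 1 ⌊X⌋ with hB
  set v : (Fin s → ℤ) → Fin k → ZMod M := fun x j => ∑ i, (x i : ZMod M) ^ (j.val + 1) with hv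
  have hexp : ∀ g : Fin k → ZMod M, expSum (Finset.Icc 1 ⌊X⌋) (fun _ => 1) id g ^ s
      = ∑ x ∈ B, 1 * ZMod.stdAddChar (∑ j, g j * v x j) := by
    intro g
    rw [expSum, Finset.sum_pow']
    refine Finset.sum_congr rfl fun x _ => ?_
    simp only [one_mul, phase, id, hv, Finset.mul_sum]
    rw [Finset.sum_comm, stdAddChar_sum]
  have hsum := sum_norm_sq_eq B (fun _ => 1) v
  have hcount : ∑ x ∈ B, ∑ y ∈ B, (if v x = v y then (1 : ℂ) * (starRingEnd ℂ) 1 else 0)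
      = (((B ×ˢ B).filter fun xy => v xy.1 = v xy.2).card : ℂ) := by
    rw [← Finset.sum_product', Finset.card_filter]
    push_cast
    simp
  have hle : Jcount s k X ≤ ((B ×ˢ B).filter fun xy => v xy.1 = v xy.2).card := by
    rw [Jcount, ← Set.ncard_coe_finset]
    refine Set.ncard_le_ncard ?_ (Finset.finite_toSet _)
    rintro ⟨x, y⟩ ⟨hx, hy, hxy⟩
    simp only [Finset.coe_filter, Finset.mem_product, hB, Fintype.mem_piFinset, Finset.mem_Icc,
      Int.le_floor, Set.mem_ofPred_eq]
    refine ⟨⟨hx, hy⟩, funext fun j => ?_⟩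
    have h := hxy (j.val + 1) (Finset.mem_Icc.2 ⟨by omega, by omega⟩)
    rw [Finset.sum_sub_distrib, sub_eq_zero] at h
    have := congrArg (Int.cast : ℤ → ZMod M) h
    push_cast at this
    exact this
  have hsum' : ∑ g : Fin k → ZMod M, ‖expSum (Finset.Icc 1 ⌊X⌋) (fun _ => 1) id g‖ ^ (2 * s)
      = (M : ℝ) ^ k * ((B ×ˢ B).filter fun xy => v xy.1 = v xy.2).card := by
    rw [hcount] at hsum
    have h : ∀ g : Fin k → ZMod M, ‖expSum (Finset.Icc 1 ⌊X⌋) (fun _ => 1) id g‖ ^ (2 * s)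
        = ‖∑ x ∈ B, 1 * ZMod.stdAddChar (∑ j, g j * v x j)‖ ^ 2 := by
      intro g
      rw [← hexp, norm_pow, ← pow_mul, mul_comm]
    rw [Finset.sum_congr rfl fun g _ => h g]
    exact_mod_cast hsum
  rw [hsum', mul_comm]
  gcongr

end

theorem card_Icc_floor_le {X : ℝ} (hX : 0 ≤ X) : ((Finset.Icc 1 ⌊X⌋).card : ℝ) ≤ X := by
  rw [Int.card_Icc, add_sub_cancel_right]
  have : ((⌊X⌋.toNat : ℤ) : ℝ) ≤ X := by
    rw [Int.toNat_of_nonneg (Int.floor_nonneg.2 hX)]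
    exact Int.floor_le X
  exact_mod_cast this

/-- The critical moment of the exponential sum over an interval. -/
theorem exists_moment_le (k : ℕ) {ε : ℝ} (hε : 0 < ε) :
    ∃ C : ℝ, 0 < C ∧ ∀ X : ℝ, 1 ≤ X → ∃ M : ℕ, ∃ _ : NeZero M,
      ∑ g : Fin k → ZMod M, ‖expSum (Finset.Icc 1 ⌊X⌋) (fun _ => 1) id g‖ ^ (k * (k + 1))
        ≤ C * X ^ (crit k + ε) * (M : ℝ) ^ k := by
  rcases Nat.eq_zero_or_pos k with rfl | hk
  · refine ⟨1, one_pos, fun X hX => ⟨1, inferInstance, ?_⟩⟩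
    simpa [crit] using Real.one_le_rpow hX hε.le
  obtain ⟨p, hle, hp⟩ := Nat.exists_infinite_primes (16 + k)
  have : Fact p.Prime := ⟨hp⟩
  have hp1 : (1 : ℝ) < p := by exact_mod_cast hp.one_lt
  have hp0 : (0 : ℝ) < p := by linarith
  obtain ⟨C, hC, hdec⟩ := decouplesEps (by omega : 16 ≤ p) k hk (by omega) ε hε
  have hcrit : 1 ≤ crit k := by
    have : (1 : ℝ) ≤ k := by exact_mod_cast hk
    rw [crit]
    nlinarith
  refine ⟨C * (p : ℝ) ^ (crit k - 1 + ε), by positivity, fun X hX => ?_⟩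
  obtain ⟨n, hn, hn'⟩ : ∃ n : ℕ, X ≤ (p : ℝ) ^ n ∧ (p : ℝ) ^ n ≤ p * X := by
    obtain ⟨n, h1, h2⟩ := exists_nat_pow_near hX hp1
    refine ⟨n + 1, h2.le, ?_⟩
    rw [pow_succ']
    gcongr
  refine ⟨p ^ (k * n), inferInstance, (hdec n _ _ _).trans ?_⟩
  have hlevel := levelMoment_le_card (M := p ^ (k * n)) (k := k) (S := Finset.Icc 1 ⌊X⌋)
    (N := p ^ n) (q := k * (k + 1)) (pow_pos hp.pos n) (by positivity) (by
      intro i hi j hj hd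
      rw [Finset.mem_Icc] at hi hj
      have h1 : ⌊X⌋ ≤ ((p ^ n : ℕ) : ℤ) := by
        have := (Int.floor_le X).trans hn
        exact_mod_cast this
      have h2 : |i - j| < ((p ^ n : ℕ) : ℤ) := abs_lt.2 ⟨by linarith [hi.1, hj.2], by
        linarith [hi.2, hj.1]⟩
      exact sub_eq_zero.1 (Int.eq_zero_of_abs_lt_dvd hd h2))
  have hM : (0 : ℝ) ≤ ((p ^ (k * n) : ℕ) : ℝ) ^ k := by positivity
  have hX0 : 0 < X := by linarith
  calc _ ≤ C * (p : ℝ) ^ (ε * n) * (p : ℝ) ^ ((n : ℝ) * (crit k - 1))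
        * (X * ((p ^ (k * n) : ℕ) : ℝ) ^ k) :=
        mul_le_mul_of_nonneg_left (hlevel.trans (mul_le_mul_of_nonneg_right
          (card_Icc_floor_le hX0.le) hM))
          (by positivity)
    _ = C * ((p : ℝ) ^ n) ^ (crit k - 1 + ε) * (X * ((p ^ (k * n) : ℕ) : ℝ) ^ k) := by
        rw [mul_assoc C, ← Real.rpow_add hp0, ← Real.rpow_natCast (p : ℝ) n,
          ← Real.rpow_mul hp0.le]
        ring_nf
    _ ≤ C * (p * X) ^ (crit k - 1 + ε) * (X * ((p ^ (k * n) : ℕ) : ℝ) ^ k) := by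
        have : 0 ≤ crit k - 1 + ε := by linarith
        gcongr
    _ = _ := by
        have : X ^ (crit k + ε) = X ^ (crit k - 1 + ε) * X := by
          rw [← Real.rpow_add_one hX0.ne']
          ring_nf
        rw [Real.mul_rpow hp0.le hX0.le, this]
        ring

/-- Interpolation between the `q`-th moment and pointwise bounds. -/
theorem pow_le_rpow_add_rpow_mul_pow {X y E : ℝ} {s q : ℕ} (hX : 1 ≤ X) (hy : 0 ≤ y) (hyX : y ≤ X)
    (hs : s ≤ E) (hq : 2 * (s : ℝ) - q / 2 ≤ E) :
    y ^ (2 * s) ≤ X ^ E + X ^ (E - q / 2) * y ^ q := by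
  have hX0 : 0 < X := by linarith
  rcases le_total q (2 * s) with h | h
  · obtain ⟨d, hd⟩ := Nat.exists_eq_add_of_le h
    have hd' : 2 * (s : ℝ) = q + d := by exact_mod_cast hd
    have h1 : y ^ d ≤ X ^ (E - q / 2) := by
      refine (pow_le_pow_left₀ hy hyX d).trans ?_
      rw [← Real.rpow_natCast]
      exact Real.rpow_le_rpow_of_exponent_le hX (by linarith)
    rw [hd, pow_add, mul_comm]
    have h2 : 0 ≤ X ^ E := by positivity
    nlinarith [mul_le_mul_of_nonneg_right h1 (pow_nonneg hy q)]
  · rcases le_total (y ^ 2) X with hle | hle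
    · have h1 : y ^ (2 * s) ≤ X ^ E := by
        rw [pow_mul]
        refine (pow_le_pow_left₀ (sq_nonneg y) hle s).trans ?_
        rw [← Real.rpow_natCast]
        exact Real.rpow_le_rpow_of_exponent_le hX hs
      have h2 : 0 ≤ X ^ (E - q / 2) * y ^ q := by positivity
      linarith
    · obtain ⟨d, hd⟩ := Nat.exists_eq_add_of_le h
      have hd' : (q : ℝ) = 2 * s + d := by exact_mod_cast hd
      have h1 : 1 ≤ X ^ (E - q / 2) * y ^ d := by
        have h2 : X ^ ((d : ℝ) / 2) ≤ y ^ d := by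
          calc X ^ ((d : ℝ) / 2) ≤ (y ^ 2) ^ ((d : ℝ) / 2) :=
                Real.rpow_le_rpow hX0.le hle (by positivity)
            _ = y ^ d := by
                rw [← Real.rpow_natCast y 2, ← Real.rpow_mul hy, ← Real.rpow_natCast y d]
                push_cast
                ring_nf
        calc (1 : ℝ) ≤ X ^ (E - q / 2 + (d : ℝ) / 2) := Real.one_le_rpow hX (by linarith)
          _ = X ^ (E - q / 2) * X ^ ((d : ℝ) / 2) := Real.rpow_add hX0 _ _
          _ ≤ _ := by gcongr
      have h3 : 0 ≤ X ^ E := by positivity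
      have h4 := mul_le_mul_of_nonneg_right h1 (pow_nonneg hy (2 * s))
      have h5 : y ^ q = y ^ (2 * s) * y ^ d := by rw [hd, pow_add]
      rw [h5]
      linarith

end Vinogradov

/-- Theorem 1.2(i): for 2m ≤ k and s ≥ (k-m)² + (k-m), one has
J_{s,k}(X) ≤ C X^{2s - k(k+1)/2 + m² + ε}. -/
theorem theorem1_2_part_i (k s m : ℕ) (hm : 2 * m ≤ k)
    (hs : ((k : ℝ) - m) ^ 2 + ((k : ℝ) - m) ≤ (s : ℝ)) (ε : ℝ) (hε : 0 < ε) :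
    ∃ C : ℝ, 0 < C ∧ ∀ X : ℝ, 1 ≤ X →
      (Jcount s k X : ℝ) ≤
        C * X ^ (2 * (s : ℝ) - (k : ℝ) * ((k : ℝ) + 1) / 2 + (m : ℝ) ^ 2 + ε) := by
  obtain ⟨C, hC, hmoment⟩ := Vinogradov.exists_moment_le k hε
  refine ⟨1 + C, by positivity, fun X hX => ?_⟩
  obtain ⟨M, hM, hle⟩ := hmoment X hX
  have hX0 : 0 < X := by linarith
  set E : ℝ := 2 * (s : ℝ) - (k : ℝ) * ((k : ℝ) + 1) / 2 + (m : ℝ) ^ 2 with hE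
  have hsE : (s : ℝ) ≤ E := by
    have h1 : 0 ≤ (k : ℝ) - 2 * m := by
      rw [sub_nonneg]
      exact_mod_cast hm
    rw [hE]
    nlinarith
  have hqE : 2 * (s : ℝ) - (k * (k + 1) : ℕ) / 2 ≤ E := by
    rw [hE]
    push_cast
    nlinarith
  have hM0 : (0 : ℝ) < (M : ℝ) ^ k := by
    have := NeZero.pos M
    positivity
  refine le_of_mul_le_mul_right ?_ hM0
  calc (Jcount s k X : ℝ) * (M : ℝ) ^ k
      ≤ ∑ g : Fin k → ZMod M,
          ‖Vinogradov.expSum (Finset.Icc 1 ⌊X⌋) (fun _ => 1) id g‖ ^ (2 * s) :=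
        Vinogradov.Jcount_mul_le s X
    _ ≤ ∑ g : Fin k → ZMod M, (X ^ E + X ^ (E - (k * (k + 1) : ℕ) / 2)
          * ‖Vinogradov.expSum (Finset.Icc 1 ⌊X⌋) (fun _ => 1) id g‖ ^ (k * (k + 1))) := by
        refine Finset.sum_le_sum fun g _ =>
          Vinogradov.pow_le_rpow_add_rpow_mul_pow hX (norm_nonneg _)
            ((Vinogradov.norm_expSum_le_card _ g).trans (Vinogradov.card_Icc_floor_le hX0.le))
            hsE hqE
    _ ≤ (M : ℝ) ^ k * X ^ E
        + X ^ (E - (k * (k + 1) : ℕ) / 2) * (C * X ^ (Vinogradov.crit k + ε) * (M : ℝ) ^ k) := by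
        rw [Finset.sum_add_distrib, ← Finset.mul_sum]
        refine add_le_add (le_of_eq ?_) (mul_le_mul_of_nonneg_left hle (by positivity))
        simp [ZMod.card]
    _ = (X ^ E + C * X ^ (E + ε)) * (M : ℝ) ^ k := by
        have : X ^ (E + ε) = X ^ (E - (k * (k + 1) : ℕ) / 2) * X ^ (Vinogradov.crit k + ε) := by
          rw [← Real.rpow_add hX0, Vinogradov.crit]
          push_cast
          ring_nf
        rw [this]
        ring
    _ ≤ (1 + C) * X ^ (E + ε) * (M : ℝ) ^ k := by
        have : X ^ E ≤ X ^ (E + ε) := Real.rpow_le_rpow_of_exponent_le hX (by linarith)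
        gcongr
        linarith
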